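/- arXiv:0911.4683 — 2 statements merged into one kernel-verified Lean document; each statement's English description precedes it below -/
import Mathlib

section
/- Let μ be a Borel measure on ℝ with μ({0}) = 0 and ∫_ℝ min(1,u²) μ(du) < ∞, satisfying μ((0,∞)) = +∞, ∫_{|u|≥1} e^{Cu} μ(du) < ∞ for every C ∈ ℝ, and conditions (T1) and (T2). Fix λ > 0 and define Ψ(z) = ∫_{−∞}^0 ∫_ℝ (e^{−iz e^{λs} u} − 1 + iz e^{λs} u) μ(du) ds, p(x) = (1/2π) ∫_ℝ e^{ixz + Ψ(z)} dz, 𝓜_k(ζ) = ∫_{−∞}^0 e^{kλs} M_k(e^{λs} ζ) ds, and for x ≥ 0 let ζ(x) be the unique ζ ≥ 0 with 𝓜₁(ζ) = x. Then for every bounded set A ⊆ ℝ, sup_{a ∈ A} | (p(x+a)/p(x)) · e^{a·ζ(x)} − 1 | → 0 as x → +∞. -/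
open MeasureTheory Filter Set

/-- The exponential moment functions `M_k` of a Lévy measure `μ`. -/
noncomputable def levyM (μ : Measure ℝ) : ℕ → ℝ → ℝ
  | 0, ξ => ∫ u, (Real.exp (ξ * u) - 1 - ξ * u) ∂μ
  | 1, ξ => ∫ u, u * (Real.exp (ξ * u) - 1) ∂μ
  | (n + 2), ξ => ∫ u, u ^ (n + 2) * Real.exp (ξ * u) ∂μ

/-- `𝓜_k(ζ) = ∫_{−∞}^0 e^{kλs} M_k(e^{λs}ζ) ds`, the moment functions of the
Ornstein–Uhlenbeck kernel `f(s) = e^{λs}` on `(−∞,0]`. -/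
noncomputable def ouM (μ : Measure ℝ) (lam : ℝ) (k : ℕ) (ξ : ℝ) : ℝ :=
  ∫ s in Set.Iic (0 : ℝ), (Real.exp (lam * s)) ^ k * levyM μ k (Real.exp (lam * s) * ξ)

/-- `Ψ(z) = ∫_{−∞}^0 ∫_ℝ (e^{−ize^{λs}u} − 1 + ize^{λs}u) μ(du) ds`. -/
noncomputable def ouPsi (μ : Measure ℝ) (lam : ℝ) (z : ℂ) : ℂ :=
  ∫ s in Set.Iic (0 : ℝ), ∫ u,
    (Complex.exp (-(Complex.I * z * ((Real.exp (lam * s) * u : ℝ) : ℂ))) - 1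
      + Complex.I * z * ((Real.exp (lam * s) * u : ℝ) : ℂ)) ∂μ

/-!
The law of `∫_{-∞}^0 e^{λs} dZ_s` is infinitely divisible, its Lévy measure `ν` being the image of
`ds ⊗ μ` under `(s, u) ↦ e^{λs} u`, and `Ψ` and `𝓜_k` are the exponent and the exponential moments
of `ν`. Shifting the contour of Fourier inversion to height `ζ` expresses `p(x)` as
`e^{-xζ + 𝓜₀(ζ)}` times the value at `x - 𝓜₁(ζ)` of the density of the centred law with Lévy
measure `e^{ζv} ν(dv)`. For `ζ = ζ(x)` the prefactors of `p(x + a)` and `p(x)` have ratio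
`e^{-aζ(x)}`, so it suffices that the tilted density, rescaled by its standard deviation `√𝓜₂(ζ)`,
is asymptotically constant near the origin. This is a local central limit theorem: the rescaled
characteristic function converges to the Gaussian one because `𝓜₄/𝓜₂² → 0`, by (T1). It is
dominated near the origin by means of `1 - cos θ ≥ (θ² - θ⁴)/2`; away from the origin, the phase
`z e^{λs} u` of a single jump oscillates as `s` varies, so the decay exponent grows exponentially in
`ζ`, which by (T2) outweighs the normalisation.
-/

section Elementary

open Complex (I)

lemma norm_exp_sub_one_le_mul_exp (w : ℂ) : ‖Complex.exp w - 1‖ ≤ ‖w‖ * Real.exp ‖w‖ := by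
  simpa using Complex.norm_exp_sub_sum_le_norm_mul_exp w 1

lemma norm_exp_sub_one_sub_self_le_mul_exp (w : ℂ) :
    ‖Complex.exp w - 1 - w‖ ≤ ‖w‖ ^ 2 * Real.exp ‖w‖ := by
  simpa [Finset.sum_range_succ, sub_sub] using Complex.norm_exp_sub_sum_le_norm_mul_exp w 2

lemma norm_exp_sub_quadratic_le_mul_exp (w : ℂ) :
    ‖Complex.exp w - 1 - w - w ^ 2 / 2‖ ≤ ‖w‖ ^ 3 * Real.exp ‖w‖ := by
  simpa [Finset.sum_range_succ, sub_sub, add_assoc] using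
    Complex.norm_exp_sub_sum_le_norm_mul_exp w 3

lemma norm_exp_neg_I_mul_sub_quadratic_le (θ : ℝ) :
    ‖Complex.exp (-(I * θ)) - 1 + I * θ + (θ : ℂ) ^ 2 / 2‖ ≤ 4 * |θ| ^ 3 := by
  have norm_I_mul : ‖I * (θ : ℂ)‖ = |θ| := by simp
  rcases le_or_gt |θ| 1 with small | large
  · have taylor := norm_exp_sub_quadratic_le_mul_exp (-(I * θ))
    have exp_le : Real.exp |θ| ≤ 4 :=
      (Real.exp_le_exp.2 small).trans (by linarith [Real.exp_one_lt_d9])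
    rw [norm_neg, norm_I_mul, neg_sq, mul_pow, Complex.I_sq] at taylor
    calc _ = ‖Complex.exp (-(I * θ)) - 1 - -(I * θ) - -1 * (θ : ℂ) ^ 2 / 2‖ := by
          congr 1; ring
      _ ≤ |θ| ^ 3 * Real.exp |θ| := taylor
      _ ≤ |θ| ^ 3 * 4 := by gcongr
      _ = 4 * |θ| ^ 3 := mul_comm _ _
  · have norm_exp : ‖Complex.exp (-(I * θ))‖ = 1 := by simp [Complex.norm_exp]
    have norm_sq : ‖(θ : ℂ) ^ 2 / 2‖ = |θ| ^ 2 / 2 := by simp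
    calc _ ≤ ‖Complex.exp (-(I * θ))‖ + ‖(1 : ℂ)‖ + ‖I * (θ : ℂ)‖ + ‖(θ : ℂ) ^ 2 / 2‖ :=
          norm_add_le_of_le (norm_add_le_of_le (norm_sub_le _ _) le_rfl) le_rfl
      _ = 1 + 1 + |θ| + |θ| ^ 2 / 2 := by rw [norm_exp, norm_I_mul, norm_sq, norm_one]
      _ ≤ 4 * |θ| ^ 3 := by nlinarith [mul_pos (sub_pos.2 large) (sub_pos.2 large)]

lemma sq_sub_pow_four_le_one_sub_cos (x : ℝ) : x ^ 2 / 2 - x ^ 4 / 2 ≤ 1 - Real.cos x := by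
  rcases le_or_gt |x| 1 with small | large
  · have taylor := (abs_le.1 (Real.cos_bound small)).2
    rw [Even.pow_abs (by decide)] at taylor
    linarith [pow_nonneg (sq_nonneg x) 2, show x ^ 4 = (x ^ 2) ^ 2 by ring]
  · have one_le : 1 ≤ x ^ 2 := by rw [← sq_abs]; nlinarith
    nlinarith [Real.cos_le_one x]

lemma exp_mul_le_exp_abs_mul_abs (a b : ℝ) : Real.exp (a * b) ≤ Real.exp (|a| * |b|) := by
  rw [← abs_mul]
  exact Real.exp_le_exp.2 (le_abs_self _)

lemma four_mul_abs_cube_le {ε : ℝ} (hε : 0 < ε) (y : ℝ) :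
    4 * |y| ^ 3 ≤ 2 * ε * y ^ 2 + 2 / ε * y ^ 4 := by
  have square : 2 * ε * |y| ^ 2 + 2 / ε * |y| ^ 4 - 4 * |y| ^ 3
      = 2 / ε * (|y| * (ε - |y|)) ^ 2 := by
    field_simp
    ring
  have square_nonneg : 0 ≤ 2 / ε * (|y| * (ε - |y|)) ^ 2 := by positivity
  rw [sq_abs, Even.pow_abs (by decide)] at square
  linarith

lemma exists_lt_measure_Ioi {μ : Measure ℝ} {c : ENNReal} {a : ℝ} (hc : c < μ (Ioi a)) :
    ∃ b > a, c < μ (Ioi b) := by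
  obtain ⟨u, u_anti, u_gt, u_lim⟩ := exists_seq_strictAnti_tendsto a
  have mono : Monotone fun n => Ioi (u n) := fun _ _ h => Ioi_subset_Ioi (u_anti.antitone h)
  have lim := tendsto_measure_iUnion_atTop (μ := μ) mono
  rw [(isGLB_of_tendsto_atTop u_anti.antitone u_lim).iUnion_Ioi_eq] at lim
  obtain ⟨n, hn⟩ := (lim.eventually_const_lt hc).exists
  exact ⟨u n, u_gt n, hn⟩

lemma mul_measureReal_le_integral {α : Type*} [MeasurableSpace α] {μ : Measure α} {f : α → ℝ}
    (hf : Integrable f μ) (hf_nonneg : 0 ≤ᵐ[μ] f) {S : Set α} (hS : MeasurableSet S)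
    (hS_fin : μ S ≠ ⊤) {c : ℝ} (hc : ∀ᵐ u ∂μ, u ∈ S → c ≤ f u) : c * μ.real S ≤ ∫ u, f u ∂μ :=
  calc c * μ.real S = ∫ _ in S, c ∂μ := by rw [setIntegral_const, smul_eq_mul, mul_comm]
    _ ≤ ∫ u in S, f u ∂μ :=
      integral_mono_ae (integrableOn_const hS_fin) hf.integrableOn ((ae_restrict_iff' hS).2 hc)
    _ ≤ ∫ u, f u ∂μ := setIntegral_le_integral hf hf_nonneg

end Elementary

section ExponentialMoments

variable {E : Type*} [NormedAddCommGroup E] {ν : Measure ℝ}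

/-- Domination by a multiple of some `v² e^{R|v|}`, the growth condition under which a continuous
function is integrable against every measure satisfying `HasExpMoments`. -/
def QuadExpBound (f : ℝ → E) : Prop :=
  ∃ C R : ℝ, ∀ v, ‖f v‖ ≤ C * (v ^ 2 * Real.exp (R * |v|))

/-- A Lévy measure with square integrable small jumps and all exponential moments of large jumps,
encoded as integrability of `v² e^{R|v|}` for every `R`. -/
def HasExpMoments (ν : Measure ℝ) : Prop :=
  ∀ R : ℝ, Integrable (fun v : ℝ => v ^ 2 * Real.exp (R * |v|)) ν

lemma HasExpMoments.integrable (hν : HasExpMoments ν) {f : ℝ → E} (hf : Continuous f)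
    (hbound : QuadExpBound f) : Integrable f ν := by
  obtain ⟨C, R, hCR⟩ := hbound
  exact ((hν R).const_mul C).mono' hf.aestronglyMeasurable (Eventually.of_forall hCR)

lemma QuadExpBound.exp_smul [NormedSpace ℝ E] {f : ℝ → E} (hf : QuadExpBound f) (ζ : ℝ) :
    QuadExpBound fun v => Real.exp (ζ * v) • f v := by
  obtain ⟨C, R, hCR⟩ := hf
  refine ⟨C, |ζ| + R, fun v => ?_⟩
  rw [norm_smul, Real.norm_of_nonneg (Real.exp_pos _).le]
  calc _ ≤ Real.exp (|ζ| * |v|) * (C * (v ^ 2 * Real.exp (R * |v|))) :=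
        mul_le_mul (exp_mul_le_exp_abs_mul_abs ζ v) (hCR v) (norm_nonneg _) (Real.exp_pos _).le
    _ = C * (v ^ 2 * Real.exp ((|ζ| + R) * |v|)) := by rw [add_mul, Real.exp_add]; ring

lemma quadExpBound_pow (n : ℕ) : QuadExpBound fun v : ℝ => v ^ (n + 2) := by
  refine ⟨n.factorial, 1, fun v => ?_⟩
  have pow_le : |v| ^ n ≤ n.factorial * Real.exp |v| :=
    (div_le_iff₀' (by positivity)).1 (Real.pow_div_factorial_le_exp _ (abs_nonneg v) n)
  calc ‖v ^ (n + 2)‖ = |v| ^ n * v ^ 2 := by rw [norm_pow, Real.norm_eq_abs, pow_add, sq_abs]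
    _ ≤ n.factorial * Real.exp |v| * v ^ 2 := by gcongr
    _ = n.factorial * (v ^ 2 * Real.exp (1 * |v|)) := by rw [one_mul]; ring

lemma quadExpBound_one_sub_cos (z : ℝ) : QuadExpBound fun v : ℝ => 1 - Real.cos (z * v) := by
  refine ⟨z ^ 2 / 2, 0, fun v => ?_⟩
  rw [Real.norm_of_nonneg (sub_nonneg.2 (Real.cos_le_one _)), zero_mul, Real.exp_zero, mul_one]
  linarith [Real.one_sub_sq_div_two_le_cos (x := z * v), mul_pow z v 2]

/-- The integrand of `levyM ν k ξ`. -/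
noncomputable def momentKernel : ℕ → ℝ → ℝ → ℝ
  | 0, ξ, u => Real.exp (ξ * u) - 1 - ξ * u
  | 1, ξ, u => u * (Real.exp (ξ * u) - 1)
  | n + 2, ξ, u => u ^ (n + 2) * Real.exp (ξ * u)

lemma levyM_eq_integral_momentKernel (ν : Measure ℝ) (k : ℕ) (ξ : ℝ) :
    levyM ν k ξ = ∫ u, momentKernel k ξ u ∂ν :=
  match k with
  | 0 => rfl
  | 1 => rfl
  | _ + 2 => rfl

lemma continuous_momentKernel (k : ℕ) (ξ : ℝ) : Continuous (momentKernel k ξ) := by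
  match k with
  | 0 | 1 | n + 2 => unfold momentKernel; fun_prop

lemma momentKernel_mul (k : ℕ) (ξ c u : ℝ) :
    momentKernel k ξ (c * u) = c ^ k * momentKernel k (c * ξ) u := by
  have comm : ξ * (c * u) = c * ξ * u := by ring
  match k with
  | 0 => rw [momentKernel, momentKernel, comm, pow_zero, one_mul]
  | 1 => rw [momentKernel, momentKernel, comm, pow_one, mul_assoc]
  | n + 2 => rw [momentKernel, momentKernel, comm, mul_pow, mul_assoc]

lemma momentKernel_nonneg {k : ℕ} (hk : Even k) (ξ u : ℝ) : 0 ≤ momentKernel k ξ u := by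
  match k with
  | 0 => unfold momentKernel; linarith [Real.add_one_le_exp (ξ * u)]
  | 1 => exact absurd hk (by decide)
  | n + 2 => exact mul_nonneg (hk.pow_nonneg u) (Real.exp_pos _).le

lemma quadExpBound_momentKernel (k : ℕ) (ξ : ℝ) : QuadExpBound (momentKernel k ξ) := by
  match k with
  | 0 =>
    refine ⟨ξ ^ 2, |ξ|, fun u => ?_⟩
    have taylor := norm_exp_sub_one_sub_self_le_mul_exp (ξ * u : ℝ)
    norm_cast at taylor
    rwa [Real.norm_eq_abs (ξ * u), sq_abs, mul_pow, abs_mul, mul_assoc] at taylor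
  | 1 =>
    refine ⟨|ξ|, |ξ|, fun u => ?_⟩
    have taylor := norm_exp_sub_one_le_mul_exp (ξ * u : ℝ)
    norm_cast at taylor
    rw [Real.norm_eq_abs (ξ * u), abs_mul] at taylor
    calc ‖u * (Real.exp (ξ * u) - 1)‖ ≤ |u| * (|ξ| * |u| * Real.exp (|ξ| * |u|)) := by
          rw [norm_mul, Real.norm_eq_abs u]; gcongr
      _ = |ξ| * (u ^ 2 * Real.exp (|ξ| * |u|)) := by rw [← sq_abs u]; ring
  | n + 2 =>
    change QuadExpBound fun u => u ^ (n + 2) * Real.exp (ξ * u)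
    simpa only [smul_eq_mul, mul_comm] using (quadExpBound_pow n).exp_smul ξ

lemma HasExpMoments.integrable_momentKernel (hν : HasExpMoments ν) (k : ℕ) (ξ : ℝ) :
    Integrable (momentKernel k ξ) ν :=
  hν.integrable (continuous_momentKernel k ξ) (quadExpBound_momentKernel k ξ)

lemma levyM_nonneg (ν : Measure ℝ) {k : ℕ} (hk : Even k) (ξ : ℝ) : 0 ≤ levyM ν k ξ := by
  rw [levyM_eq_integral_momentKernel]
  exact integral_nonneg (momentKernel_nonneg hk ξ)

lemma HasExpMoments.levyM_zero_monotoneOn (hν : HasExpMoments ν) :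
    MonotoneOn (levyM ν 0) (Ici 0) := by
  intro η hη ζ _ hηζ
  have integrable := hν.integrable_momentKernel 0
  simp only [levyM_eq_integral_momentKernel]
  refine integral_mono (integrable η) (integrable ζ) fun v => ?_
  have exp_ge : Real.exp (η * v) * ((ζ - η) * v + 1) ≤ Real.exp (ζ * v) := by
    calc _ ≤ Real.exp (η * v) * Real.exp ((ζ - η) * v) := by
          gcongr; exact Real.add_one_le_exp _
      _ = Real.exp (ζ * v) := by rw [← Real.exp_add]; ring_nf
  have slope_nonneg : 0 ≤ v * (Real.exp (η * v) - 1) := by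
    rcases le_total 0 v with hv | hv
    · exact mul_nonneg hv (sub_nonneg.2 (Real.one_le_exp (mul_nonneg hη hv)))
    · exact mul_nonneg_of_nonpos_of_nonpos hv
        (sub_nonpos.2 (Real.exp_le_one_iff.2 (mul_nonpos_of_nonneg_of_nonpos hη hv)))
  have := mul_nonneg (sub_nonneg.2 hηζ) slope_nonneg
  unfold momentKernel
  linarith

lemma HasExpMoments.levyM_one_monotone (hν : HasExpMoments ν) : Monotone (levyM ν 1) := by
  intro η ζ hηζ
  have integrable := hν.integrable_momentKernel 1
  simp only [levyM_eq_integral_momentKernel]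
  refine integral_mono (integrable η) (integrable ζ) fun v => ?_
  change v * (Real.exp (η * v) - 1) ≤ v * (Real.exp (ζ * v) - 1)
  rcases le_total 0 v with hv | hv
  · gcongr
  · exact mul_le_mul_of_nonpos_left
      (sub_le_sub_right (Real.exp_le_exp.2 (mul_le_mul_of_nonpos_right hηζ hv)) 1) hv

/-- Only the half-line `u < 0` prevents `M_k` from being monotone; its contribution is bounded
by `M_k(0)`. -/
lemma HasExpMoments.levyM_le_add (hν : HasExpMoments ν) {k : ℕ} (hk : Even k) {a b : ℝ}
    (ha : 0 ≤ a) (hab : a ≤ b) : levyM ν k a ≤ levyM ν k b + levyM ν k 0 := by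
  match k with
  | 0 =>
    exact le_add_of_le_of_nonneg (hν.levyM_zero_monotoneOn ha (ha.trans hab) hab)
      (levyM_nonneg ν hk 0)
  | 1 => exact absurd hk (by decide)
  | n + 2 =>
    have integrable := hν.integrable_momentKernel (n + 2)
    simp only [levyM_eq_integral_momentKernel]
    rw [← integral_add (integrable b) (integrable 0)]
    refine integral_mono (integrable a) ((integrable b).add (integrable 0)) fun u => ?_
    have exp_le : Real.exp (a * u) ≤ Real.exp (b * u) + Real.exp (0 * u) := by
      rw [zero_mul, Real.exp_zero]
      rcases le_total 0 u with hu | hu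
      · linarith [Real.exp_le_exp.2 (mul_le_mul_of_nonneg_right hab hu)]
      · linarith [Real.exp_le_one_iff.2 (mul_nonpos_of_nonneg_of_nonpos ha hu),
          Real.exp_pos (b * u)]
    exact (mul_le_mul_of_nonneg_left exp_le (hk.pow_nonneg u)).trans_eq (mul_add _ _ _)

lemma HasExpMoments.exists_levyM_le_add (hν : HasExpMoments ν) {k : ℕ} (hk : Even k) {g : ℝ → ℝ}
    (hg : ∀ ξ, 0 ≤ g ξ) (hle : ∀ᶠ ξ in atTop, levyM ν k ξ ≤ g ξ) :
    ∃ L ≥ 0, ∀ ξ, 0 ≤ ξ → levyM ν k ξ ≤ g ξ + L := by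
  obtain ⟨X, hX⟩ := eventually_atTop.1 hle
  have L_nonneg := add_nonneg (levyM_nonneg ν hk X) (levyM_nonneg ν hk 0)
  refine ⟨levyM ν k X + levyM ν k 0, L_nonneg, fun ξ hξ => ?_⟩
  rcases le_total ξ X with h | h
  · exact le_add_of_nonneg_of_le (hg ξ) (hν.levyM_le_add hk hξ h)
  · exact le_add_of_le_of_nonneg (hX ξ h) L_nonneg

lemma HasExpMoments.measure_Ioi_lt_top (hν : HasExpMoments ν) {η : ℝ} (hη : 0 < η) :
    ν (Ioi η) < ⊤ := by
  refine (measure_mono fun u hu => ?_).trans_lt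
    ((hν 0).measure_norm_ge_lt_top (ε := η ^ 2) (by positivity))
  have lt_u : η < u := hu
  simp only [zero_mul, Real.exp_zero, mul_one, norm_pow, Real.norm_eq_abs, sq_abs, mem_ofPred_eq]
  gcongr

lemma HasExpMoments.le_levyM_two (hν : HasExpMoments ν) {η ξ : ℝ} (hη : 0 < η) (hξ : 0 ≤ ξ) :
    η ^ 2 * Real.exp (ξ * η) * ν.real (Ioi η) ≤ levyM ν 2 ξ := by
  rw [levyM_eq_integral_momentKernel]
  refine mul_measureReal_le_integral (hν.integrable_momentKernel 2 ξ)
    (Eventually.of_forall (momentKernel_nonneg even_two ξ)) measurableSet_Ioi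
    (hν.measure_Ioi_lt_top hη).ne (Eventually.of_forall fun u hu => ?_)
  have lt_u : η < u := hu
  change η ^ 2 * Real.exp (ξ * η) ≤ u ^ 2 * Real.exp (ξ * u)
  gcongr

lemma HasExpMoments.tendsto_levyM_two (hν : HasExpMoments ν) (hpos : 0 < ν (Ioi 0)) :
    Tendsto (levyM ν 2) atTop atTop := by
  obtain ⟨η, hη, measure_pos⟩ := exists_lt_measure_Ioi hpos
  have measureReal_pos : 0 < ν.real (Ioi η) :=
    ENNReal.toReal_pos measure_pos.ne' (hν.measure_Ioi_lt_top hη).ne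
  refine tendsto_atTop_mono' _ ?_ (((Real.tendsto_exp_atTop.comp
    (tendsto_id.atTop_mul_const hη)).const_mul_atTop (by positivity : 0 < η ^ 2)).atTop_mul_const
      measureReal_pos)
  filter_upwards [eventually_ge_atTop 0] with ξ hξ using hν.le_levyM_two hη hξ

lemma HasExpMoments.tendsto_atTop_of_levyM_one_eq (hν : HasExpMoments ν) {ζ : ℝ → ℝ}
    (hζ : ∀ᶠ x in atTop, levyM ν 1 (ζ x) = x) : Tendsto ζ atTop atTop := by
  refine tendsto_atTop.2 fun R => ?_
  filter_upwards [hζ, eventually_gt_atTop (levyM ν 1 R)] with x hx lt_x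
  exact (hν.levyM_one_monotone.reflect_lt (lt_x.trans_eq hx.symm)).le

end ExponentialMoments

section LevyExponent

open Complex (I)

variable {ν : Measure ℝ}

/-- The integrand `e^{-iwv} - 1 + iwv` of the Lévy–Khinchine exponent. -/
noncomputable def levyKernel (w : ℂ) (v : ℝ) : ℂ :=
  Complex.exp (-(I * w * v)) - 1 + I * w * v

/-- The centred Lévy–Khinchine exponent of `ν`, at complex argument. -/
noncomputable def levyExponent (ν : Measure ℝ) (w : ℂ) : ℂ :=
  ∫ v, levyKernel w v ∂ν

/-- The Lévy–Khinchine exponent of the Esscher transform `e^{ζv} ν(dv)`. -/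
noncomputable def tiltedExponent (ν : Measure ℝ) (ζ z : ℝ) : ℂ :=
  ∫ v, Real.exp (ζ * v) • levyKernel z v ∂ν

/-- Minus the real part of `tiltedExponent ν ζ z`, which governs the decay in `z` of the
characteristic function of the Esscher transform. -/
noncomputable def tiltedDecay (ν : Measure ℝ) (ζ z : ℝ) : ℝ :=
  ∫ v, Real.exp (ζ * v) • (1 - Real.cos (z * v)) ∂ν

lemma continuous_levyKernel (w : ℂ) : Continuous (levyKernel w) := by
  unfold levyKernel
  fun_prop

lemma norm_I_mul_mul_ofReal (w : ℂ) (v : ℝ) : ‖I * w * v‖ = ‖w‖ * |v| := by simp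

lemma quadExpBound_levyKernel (w : ℂ) : QuadExpBound (levyKernel w) := by
  refine ⟨‖w‖ ^ 2, ‖w‖, fun v => ?_⟩
  have taylor := norm_exp_sub_one_sub_self_le_mul_exp (-(I * w * v))
  rwa [sub_neg_eq_add, norm_neg, norm_I_mul_mul_ofReal, mul_pow, sq_abs,
    mul_assoc (‖w‖ ^ 2)] at taylor

lemma hasDerivAt_levyKernel (w : ℂ) (v : ℝ) :
    HasDerivAt (fun w => levyKernel w v) (-(I * v) * (Complex.exp (-(I * w * v)) - 1)) w := by
  have linear : HasDerivAt (fun w : ℂ => I * w * v) (I * v) w := by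
    simpa using ((hasDerivAt_id w).const_mul I).mul_const (v : ℂ)
  refine ((linear.fun_neg.cexp.sub_const 1).add linear).congr_deriv ?_
  ring

lemma norm_deriv_levyKernel_le {w : ℂ} {R : ℝ} (hw : ‖w‖ ≤ R) (v : ℝ) :
    ‖-(I * v) * (Complex.exp (-(I * w * v)) - 1)‖ ≤ R * (v ^ 2 * Real.exp (R * |v|)) := by
  have taylor := norm_exp_sub_one_le_mul_exp (-(I * w * v))
  rw [norm_neg, norm_I_mul_mul_ofReal] at taylor
  have norm_I_mul : ‖-(I * (v : ℂ))‖ = |v| := by simp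
  have hR : 0 ≤ R := (norm_nonneg w).trans hw
  rw [norm_mul, norm_I_mul]
  calc _ ≤ |v| * (‖w‖ * |v| * Real.exp (‖w‖ * |v|)) := by gcongr
    _ ≤ |v| * (R * |v| * Real.exp (R * |v|)) := by gcongr
    _ = R * (v ^ 2 * Real.exp (R * |v|)) := by rw [← sq_abs v]; ring

lemma levyKernel_add_mul_I (ζ z v : ℝ) :
    levyKernel (z + ζ * I) v = Real.exp (ζ * v) • levyKernel z v
      + momentKernel 0 ζ v - I * z * momentKernel 1 ζ v := by
  have exp_split : Complex.exp (-(I * (z + ζ * I) * v)) =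
      Complex.exp (ζ * v) * Complex.exp (-(I * z * v)) := by
    rw [← Complex.exp_add]
    congr 1
    linear_combination -(ζ * v : ℂ) * Complex.I_sq
  simp only [levyKernel, momentKernel, Complex.real_smul, exp_split]
  push_cast
  linear_combination (ζ * v : ℂ) * Complex.I_sq

lemma levyKernel_re (z v : ℝ) : (levyKernel z v).re = -(1 - Real.cos (z * v)) := by
  simp [levyKernel, Complex.exp_re]

lemma norm_levyKernel_add_sq_le {ε : ℝ} (hε : 0 < ε) (z v : ℝ) :
    ‖levyKernel z v + ((z ^ 2 / 2 * v ^ 2 : ℝ) : ℂ)‖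
      ≤ 2 * ε * z ^ 2 * v ^ 2 + 2 / ε * z ^ 4 * v ^ 4 := by
  have taylor := norm_exp_neg_I_mul_sub_quadratic_le (z * v)
  have interpolation := four_mul_abs_cube_le hε (z * v)
  calc _ = ‖Complex.exp (-(I * (z * v : ℝ))) - 1 + I * (z * v : ℝ)
          + ((z * v : ℝ) : ℂ) ^ 2 / 2‖ := by
        unfold levyKernel; push_cast; congr 1; ring_nf
    _ ≤ 2 * ε * (z * v) ^ 2 + 2 / ε * (z * v) ^ 4 := taylor.trans interpolation
    _ = _ := by ring

lemma tiltedDecay_nonneg (ν : Measure ℝ) (ζ z : ℝ) : 0 ≤ tiltedDecay ν ζ z :=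
  integral_nonneg fun _ =>
    smul_nonneg (Real.exp_pos _).le (sub_nonneg.2 (Real.cos_le_one _))

namespace HasExpMoments

variable (hν : HasExpMoments ν)
include hν

lemma integrable_levyKernel (w : ℂ) : Integrable (levyKernel w) ν :=
  hν.integrable (continuous_levyKernel w) (quadExpBound_levyKernel w)

lemma integrable_tilted_levyKernel (ζ : ℝ) (w : ℂ) :
    Integrable (fun v => Real.exp (ζ * v) • levyKernel w v) ν := by
  have := continuous_levyKernel w
  exact hν.integrable (by fun_prop) ((quadExpBound_levyKernel w).exp_smul ζ)

lemma integrable_tilted_one_sub_cos (ζ z : ℝ) :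
    Integrable (fun v => Real.exp (ζ * v) • (1 - Real.cos (z * v))) ν :=
  hν.integrable (by fun_prop) ((quadExpBound_one_sub_cos z).exp_smul ζ)

lemma levyExponent_add_mul_I (ζ z : ℝ) :
    levyExponent ν (z + ζ * I) = tiltedExponent ν ζ z + levyM ν 0 ζ - I * z * levyM ν 1 ζ := by
  have integrable₀ : Integrable (fun v => (momentKernel 0 ζ v : ℂ)) ν :=
    (hν.integrable_momentKernel 0 ζ).ofReal
  have integrable₁ : Integrable (fun v => (momentKernel 1 ζ v : ℂ)) ν :=
    (hν.integrable_momentKernel 1 ζ).ofReal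
  have integrable_tilted := hν.integrable_tilted_levyKernel ζ z
  simp only [levyExponent, levyKernel_add_mul_I, tiltedExponent, levyM_eq_integral_momentKernel]
  rw [integral_sub (integrable_tilted.fun_add integrable₀) (integrable₁.const_mul _),
    integral_add integrable_tilted integrable₀, integral_const_mul, integral_complex_ofReal,
    integral_complex_ofReal]

lemma tiltedExponent_re (ζ z : ℝ) : (tiltedExponent ν ζ z).re = -tiltedDecay ν ζ z := by
  rw [tiltedExponent, tiltedDecay, ← integral_neg, ← RCLike.re_to_complex,
    ← integral_re (hν.integrable_tilted_levyKernel ζ z)]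
  simp only [RCLike.re_to_complex, Complex.smul_re, levyKernel_re, smul_neg]

lemma differentiable_levyExponent : Differentiable ℂ (levyExponent ν) := by
  intro w₀
  refine (hasDerivAt_integral_of_dominated_loc_of_deriv_le (s := Metric.ball w₀ 1)
    (bound := fun v => (‖w₀‖ + 1) * (v ^ 2 * Real.exp ((‖w₀‖ + 1) * |v|)))
    (Metric.ball_mem_nhds _ one_pos)
    (Eventually.of_forall fun w => (continuous_levyKernel w).aestronglyMeasurable)
    (hν.integrable_levyKernel w₀) (Continuous.aestronglyMeasurable (by fun_prop))
    (Eventually.of_forall fun v w hw => norm_deriv_levyKernel_le ?_ v) ((hν _).const_mul _)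
    (Eventually.of_forall fun v w _ => hasDerivAt_levyKernel w v)).2.differentiableAt
  have := norm_le_norm_add_norm_sub' w w₀
  linarith [mem_ball_iff_norm.1 hw]

lemma continuous_tiltedExponent (ζ : ℝ) : Continuous (tiltedExponent ν ζ) := by
  have shift (z : ℝ) : tiltedExponent ν ζ z =
      levyExponent ν (z + ζ * I) - levyM ν 0 ζ + I * z * levyM ν 1 ζ := by
    rw [hν.levyExponent_add_mul_I]
    ring
  have := hν.differentiable_levyExponent.continuous
  simp only [funext shift]
  fun_prop

lemma le_tiltedDecay (ζ z : ℝ) :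
    z ^ 2 * levyM ν 2 ζ / 2 - z ^ 4 * levyM ν 4 ζ / 2 ≤ tiltedDecay ν ζ z := by
  have integrable₂ := (hν.integrable_momentKernel 2 ζ).const_mul (z ^ 2 / 2)
  have integrable₄ := (hν.integrable_momentKernel 4 ζ).const_mul (z ^ 4 / 2)
  calc _ = ∫ v, (z ^ 2 / 2 * momentKernel 2 ζ v - z ^ 4 / 2 * momentKernel 4 ζ v) ∂ν := by
        rw [integral_sub integrable₂ integrable₄, integral_const_mul, integral_const_mul,
          ← levyM_eq_integral_momentKernel, ← levyM_eq_integral_momentKernel]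
        ring
    _ ≤ _ := integral_mono (integrable₂.sub integrable₄)
        (hν.integrable_tilted_one_sub_cos ζ z) fun v => ?_
  calc _ = Real.exp (ζ * v) * ((z * v) ^ 2 / 2 - (z * v) ^ 4 / 2) := by
        unfold momentKernel; ring
    _ ≤ Real.exp (ζ * v) * (1 - Real.cos (z * v)) :=
        mul_le_mul_of_nonneg_left (sq_sub_pow_four_le_one_sub_cos _) (Real.exp_pos _).le

/-- Third moments do not appear: `|zv|³` is interpolated between `(zv)²` and `(zv)⁴`. -/
lemma norm_tiltedExponent_add_le (ζ z : ℝ) {ε : ℝ} (hε : 0 < ε) :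
    ‖tiltedExponent ν ζ z + ((z ^ 2 * levyM ν 2 ζ / 2 : ℝ) : ℂ)‖ ≤
      2 * ε * (z ^ 2 * levyM ν 2 ζ) + 2 / ε * (z ^ 4 * levyM ν 4 ζ) := by
  have integrable₂ (c : ℝ) := (hν.integrable_momentKernel 2 ζ).const_mul c
  have integrable_sq : Integrable (fun v => ((z ^ 2 / 2 * momentKernel 2 ζ v : ℝ) : ℂ)) ν :=
    (integrable₂ _).ofReal
  have integrable₄ := (hν.integrable_momentKernel 4 ζ).const_mul (2 / ε * z ^ 4)
  have integral₂ (c : ℝ) : ∫ v, c * momentKernel 2 ζ v ∂ν = c * levyM ν 2 ζ := by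
    rw [integral_const_mul, levyM_eq_integral_momentKernel]
  have integral₄ : ∫ v, 2 / ε * z ^ 4 * momentKernel 4 ζ v ∂ν = 2 / ε * z ^ 4 * levyM ν 4 ζ := by
    rw [integral_const_mul, levyM_eq_integral_momentKernel]
  calc _ = ‖∫ v, (Real.exp (ζ * v) • levyKernel z v
          + ((z ^ 2 / 2 * momentKernel 2 ζ v : ℝ) : ℂ)) ∂ν‖ := by
        rw [integral_add (hν.integrable_tilted_levyKernel ζ z) integrable_sq,
          integral_complex_ofReal, integral₂, tiltedExponent, mul_div_right_comm]
    _ ≤ ∫ v, (2 * ε * z ^ 2 * momentKernel 2 ζ v + 2 / ε * z ^ 4 * momentKernel 4 ζ v) ∂ν :=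
        norm_integral_le_of_norm_le ((integrable₂ _).add integrable₄)
          (Eventually.of_forall fun v => ?_)
    _ = _ := by rw [integral_add (integrable₂ _) integrable₄, integral₂, integral₄]; ring
  calc _ = ‖Real.exp (ζ * v) • (levyKernel z v + ((z ^ 2 / 2 * v ^ 2 : ℝ) : ℂ))‖ := by
        simp only [momentKernel, Complex.real_smul]; push_cast; ring_nf
    _ ≤ Real.exp (ζ * v) * (2 * ε * z ^ 2 * v ^ 2 + 2 / ε * z ^ 4 * v ^ 4) := by
        rw [norm_smul, Real.norm_of_nonneg (Real.exp_pos _).le]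
        gcongr
        exact norm_levyKernel_add_sq_le hε z v
    _ = _ := by unfold momentKernel; ring

end HasExpMoments

end LevyExponent

section ContourShift

open Complex (I)
open scoped Topology

variable {E : Type*} [NormedAddCommGroup E] [NormedSpace ℂ E]

lemma tendsto_intervalIntegral_vertical_zero {f : ℂ → E} {ζ : ℝ} (hζ : 0 ≤ ζ) {g : ℝ → ℝ}
    (hg : Tendsto g (cocompact ℝ) (𝓝 0))
    (hbound : ∀ η ∈ Icc 0 ζ, ∀ x : ℝ, ‖f (x + η * I)‖ ≤ g x) :
    Tendsto (fun x : ℝ => ∫ η in (0 : ℝ)..ζ, f (x + η * I)) (cocompact ℝ) (𝓝 0) := by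
  refine squeeze_zero_norm (fun x => ?_) (by simpa only [zero_mul] using hg.mul_const |ζ - 0|)
  refine intervalIntegral.norm_integral_le_of_norm_le_const fun η hη => ?_
  rw [uIoc_of_le hζ] at hη
  exact hbound η (Ioc_subset_Icc_self hη) x

lemma integral_eq_integral_add_mul_I [CompleteSpace E] {f : ℂ → E} (hf : Differentiable ℂ f)
    {ζ : ℝ} (hζ : 0 ≤ ζ) {g : ℝ → ℝ} (hg_int : Integrable g) (hg : Tendsto g (cocompact ℝ) (𝓝 0))
    (hbound : ∀ η ∈ Icc 0 ζ, ∀ x : ℝ, ‖f (x + η * I)‖ ≤ g x) :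
    ∫ x : ℝ, f x = ∫ x : ℝ, f (x + ζ * I) := by
  have := hf.continuous
  have horizontal {η : ℝ} (hη : η ∈ Icc 0 ζ) :
      Tendsto (fun R : ℝ => ∫ x in (-R)..R, f (x + η * I)) atTop (𝓝 (∫ x : ℝ, f (x + η * I))) :=
    intervalIntegral_tendsto_integral
      (hg_int.mono' (Continuous.aestronglyMeasurable (by fun_prop))
        (Eventually.of_forall (hbound η hη)))
      tendsto_neg_atTop_atBot tendsto_id
  have vertical := tendsto_intervalIntegral_vertical_zero hζ hg hbound
  have right := (vertical.mono_left atTop_le_cocompact).const_smul I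
  have left :=
    ((vertical.mono_left atBot_le_cocompact).comp tendsto_neg_atTop_atBot).const_smul I
  have cauchy (R : ℝ) : (∫ x in (-R)..R, f (x + (0 : ℝ) * I)) - (∫ x in (-R)..R, f (x + ζ * I))
      + (I • ∫ η in (0 : ℝ)..ζ, f (R + η * I))
      - (I • ∫ η in (0 : ℝ)..ζ, f ((-R : ℝ) + η * I)) = 0 :=
    Complex.integral_boundary_rect_eq_zero_of_differentiableOn f ⟨-R, 0⟩ ⟨R, ζ⟩
      hf.differentiableOn
  have limit := ((((horizontal (left_mem_Icc.2 hζ)).sub (horizontal (right_mem_Icc.2 hζ))).add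
    right).sub left).congr cauchy
  simpa [sub_eq_zero] using (tendsto_nhds_unique limit tendsto_const_nhds)

end ContourShift

section TiltedInversion

open Complex (I)

variable {ν : Measure ℝ}

/-- Uniform integrable decay of the square roots of the characteristic functions of the Esscher
transforms with `ζ ≥ 0`; the square root leaves half of the decay for domination arguments. -/
def HasTiltedDecay (ν : Measure ℝ) : Prop :=
  ∃ C : ℝ, ∀ ζ : ℝ, 0 ≤ ζ → ∀ z : ℝ,
    Real.exp (-tiltedDecay ν ζ z / 2) ≤ C * (1 + z ^ 2)⁻¹

/-- The density at `x` of the infinitely divisible law with exponent `levyExponent ν`, by Fourier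
inversion. -/
noncomputable def levyDensity (ν : Measure ℝ) (x : ℝ) : ℝ :=
  1 / (2 * Real.pi) * (∫ z : ℝ, Complex.exp (I * x * z + levyExponent ν z)).re

/-- `2π` times the density at `a` of the centred infinitely divisible law with Lévy measure
`e^{ζv} ν(dv)`. -/
noncomputable def tiltedInversion (ν : Measure ℝ) (ζ a : ℝ) : ℂ :=
  ∫ z : ℝ, Complex.exp (I * (a * z : ℝ)) * Complex.exp (tiltedExponent ν ζ z)

lemma tendsto_inv_one_add_sq_cocompact :
    Tendsto (fun z : ℝ => (1 + z ^ 2)⁻¹) (cocompact ℝ) (nhds 0) := by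
  have norm_sq := (tendsto_pow_atTop two_ne_zero).comp (tendsto_norm_cocompact_atTop (E := ℝ))
  refine (tendsto_inv_atTop_zero.comp (tendsto_atTop_add_const_left _ 1 norm_sq)).congr fun z => ?_
  simp

namespace HasExpMoments

variable (hν : HasExpMoments ν)
include hν

lemma norm_exp_add_levyExponent (x ζ z : ℝ) :
    ‖Complex.exp (I * x * (z + ζ * I) + levyExponent ν (z + ζ * I))‖ =
      Real.exp (-x * ζ + levyM ν 0 ζ - tiltedDecay ν ζ z) := by
  have re_eq : (I * x * (z + ζ * I) + levyExponent ν (z + ζ * I)).re =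
      -x * ζ + levyM ν 0 ζ - tiltedDecay ν ζ z := by
    simp [hν.levyExponent_add_mul_I, hν.tiltedExponent_re, sub_eq_add_neg, add_comm, add_left_comm]
  rw [Complex.norm_exp, re_eq]

lemma exists_norm_exp_add_levyExponent_le (hdecay : HasTiltedDecay ν) (x ζ : ℝ) :
    ∃ C : ℝ, ∀ η ∈ Icc 0 ζ, ∀ z : ℝ,
      ‖Complex.exp (I * x * (z + η * I) + levyExponent ν (z + η * I))‖ ≤ C * (1 + z ^ 2)⁻¹ := by
  obtain ⟨C, hC⟩ := hdecay
  refine ⟨Real.exp (|x| * ζ + levyM ν 0 ζ) * C, fun η ⟨hη, hηζ⟩ z => ?_⟩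
  have linear_le : -x * η ≤ |x| * ζ := mul_le_mul (neg_le_abs x) hηζ hη (abs_nonneg x)
  have levyM_le := hν.levyM_zero_monotoneOn hη (hη.trans hηζ) hηζ
  have decay_nonneg := tiltedDecay_nonneg ν η z
  rw [hν.norm_exp_add_levyExponent, mul_assoc]
  calc _ ≤ Real.exp (|x| * ζ + levyM ν 0 ζ + -tiltedDecay ν η z / 2) :=
        Real.exp_le_exp.2 (by linarith)
    _ = Real.exp (|x| * ζ + levyM ν 0 ζ) * Real.exp (-tiltedDecay ν η z / 2) := Real.exp_add _ _
    _ ≤ _ := by gcongr; exact hC η hη z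

lemma integral_exp_levyExponent_eq (hdecay : HasTiltedDecay ν) (x : ℝ) {ζ : ℝ} (hζ : 0 ≤ ζ) :
    ∫ z : ℝ, Complex.exp (I * x * z + levyExponent ν z) =
      ((Real.exp (-x * ζ + levyM ν 0 ζ) : ℝ) : ℂ) * tiltedInversion ν ζ (x - levyM ν 1 ζ) := by
  have := hν.differentiable_levyExponent
  obtain ⟨C, hC⟩ := hν.exists_norm_exp_add_levyExponent_le hdecay x ζ
  have bound_tendsto : Tendsto (fun z : ℝ => C * (1 + z ^ 2)⁻¹) (cocompact ℝ) (nhds 0) := by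
    simpa only [mul_zero] using tendsto_inv_one_add_sq_cocompact.const_mul C
  rw [integral_eq_integral_add_mul_I (f := fun w => Complex.exp (I * x * w + levyExponent ν w))
    (by fun_prop) hζ (integrable_inv_one_add_sq.const_mul C) bound_tendsto hC, tiltedInversion,
    ← integral_const_mul]
  congr 1 with z
  rw [hν.levyExponent_add_mul_I, Complex.ofReal_exp, ← Complex.exp_add, ← Complex.exp_add]
  congr 1
  push_cast
  linear_combination (x * ζ : ℂ) * Complex.I_sq

lemma levyDensity_eq (hdecay : HasTiltedDecay ν) (x : ℝ) {ζ : ℝ} (hζ : 0 ≤ ζ) :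
    levyDensity ν x = 1 / (2 * Real.pi) * (Real.exp (-x * ζ + levyM ν 0 ζ) *
      (tiltedInversion ν ζ (x - levyM ν 1 ζ)).re) := by
  rw [levyDensity, hν.integral_exp_levyExponent_eq hdecay x hζ, Complex.re_ofReal_mul]

end HasExpMoments

end TiltedInversion

section SaddlePoint

open Complex (I)
open scoped Topology

/-- Asymptotic conditions on a Lévy measure under which the density of the associated infinitely
divisible law is given, to leading order at `+∞`, by its saddle point approximation. -/
structure SaddlePointRegular (ν : Measure ℝ) : Prop where
  hasExpMoments : HasExpMoments ν
  hasTiltedDecay : HasTiltedDecay ν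
  tendsto_levyM_four_div : Tendsto (fun ζ => levyM ν 4 ζ / levyM ν 2 ζ ^ 2) atTop (𝓝 0)
  tendsto_levyM_two : Tendsto (levyM ν 2) atTop atTop
  exists_le_tiltedDecay : ∃ c > 0, ∃ δ > 0, ∀ ζ : ℝ, 0 ≤ ζ → ∀ z : ℝ,
    c * Real.exp (δ * ζ) * min 1 (z ^ 2) ≤ tiltedDecay ν ζ z
  eventually_levyM_four_le : ∀ ε > 0, ∀ᶠ ζ in atTop,
    levyM ν 4 ζ ≤ Real.exp (ε * ζ) * levyM ν 2 ζ
  eventually_levyM_two_le : ∀ ε > 0, ∀ᶠ ζ in atTop, levyM ν 2 ζ ≤ Real.exp (Real.exp (ε * ζ))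

lemma tendsto_exp_mul_atTop {c : ℝ} (hc : 0 < c) :
    Tendsto (fun x : ℝ => Real.exp (c * x)) atTop atTop :=
  Real.tendsto_exp_atTop.comp (tendsto_id.const_mul_atTop hc)

lemma integrable_abs_mul_exp_neg_half_sq :
    Integrable fun t : ℝ => |t| * Real.exp (-(1 / 2) * t ^ 2) := by
  simpa using (integrable_mul_exp_neg_mul_sq (b := 1 / 2) (by norm_num)).norm

lemma integral_exp_neg_half_sq :
    ∫ t : ℝ, ((Real.exp (-(1 / 2) * t ^ 2) : ℝ) : ℂ) = (√(2 * Real.pi) : ℂ) := by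
  rw [integral_complex_ofReal, integral_gaussian, div_div_eq_mul_div, div_one, mul_comm]

lemma mul_tiltedInversion_eq (ν : Measure ℝ) (ζ a : ℝ) {σ : ℝ} (hσ : 0 < σ) :
    (σ : ℂ) * tiltedInversion ν ζ a = ∫ t : ℝ, Complex.exp (I * (a * (t / σ) : ℝ))
      * Complex.exp (tiltedExponent ν ζ (t / σ)) := by
  have scale := Measure.integral_comp_div
    (fun z : ℝ => Complex.exp (I * (a * z : ℝ)) * Complex.exp (tiltedExponent ν ζ z)) σ
  rw [scale, abs_of_pos hσ, tiltedInversion, Complex.real_smul]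

lemma norm_exp_I_mul_mul_sub_le (θ : ℝ) (w : ℂ) {g : ℝ} (hg : 0 ≤ g) :
    ‖Complex.exp (I * θ) * w - g‖ ≤ ‖w - g‖ + |θ| * g := by
  calc _ = ‖Complex.exp (I * θ) * (w - g) + (Complex.exp (I * θ) - 1) * g‖ := by congr 1; ring
    _ ≤ ‖w - g‖ + |θ| * g := by
      refine norm_add_le_of_le ?_ ?_
      · rw [norm_mul, Complex.norm_exp_I_mul_ofReal, one_mul]
      · rw [norm_mul, Complex.norm_real, Real.norm_of_nonneg hg]
        gcongr
        exact Real.norm_exp_I_mul_ofReal_sub_one_le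

lemma norm_mul_tiltedInversion_sub_le {ν : Measure ℝ} {ζ σ : ℝ} (hσ : 0 < σ)
    (hint : Integrable fun z : ℝ => Complex.exp (tiltedExponent ν ζ z)) (a : ℝ) :
    ‖(σ : ℂ) * tiltedInversion ν ζ a - (√(2 * Real.pi) : ℂ)‖ ≤
      (∫ t : ℝ, ‖Complex.exp (tiltedExponent ν ζ (t / σ)) - (Real.exp (-(1 / 2) * t ^ 2) : ℝ)‖)
        + |a| / σ * ∫ t : ℝ, |t| * Real.exp (-(1 / 2) * t ^ 2) := by
  have int_scaled : Integrable fun t : ℝ => Complex.exp (tiltedExponent ν ζ (t / σ)) :=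
    hint.comp_div hσ.ne'
  have int_gauss : Integrable fun t : ℝ => ((Real.exp (-(1 / 2) * t ^ 2) : ℝ) : ℂ) :=
    (integrable_exp_neg_mul_sq (by norm_num)).ofReal
  have int_phase : Integrable fun t : ℝ => Complex.exp (I * (a * (t / σ) : ℝ))
      * Complex.exp (tiltedExponent ν ζ (t / σ)) :=
    int_scaled.bdd_mul (c := 1) (Continuous.aestronglyMeasurable (by fun_prop))
      (Eventually.of_forall fun t => (Complex.norm_exp_I_mul_ofReal _).le)
  have int_diff := (int_scaled.sub int_gauss).norm
  have int_linear := integrable_abs_mul_exp_neg_half_sq.const_mul (|a| / σ)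
  rw [mul_tiltedInversion_eq ν ζ a hσ, ← integral_exp_neg_half_sq,
    ← integral_sub int_phase int_gauss, ← integral_const_mul]
  refine (norm_integral_le_of_norm_le (int_diff.add int_linear)
    (Eventually.of_forall fun t => ?_)).trans_eq (integral_add int_diff int_linear)
  refine (norm_exp_I_mul_mul_sub_le (a * (t / σ)) _ (Real.exp_pos _).le).trans_eq ?_
  rw [abs_mul, abs_div, abs_of_pos hσ, mul_div_left_comm, mul_comm |t|, mul_assoc]
  rfl

namespace SaddlePointRegular

variable {ν : Measure ℝ} (hν : SaddlePointRegular ν)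
include hν

lemma eventually_exp_neg_half_tiltedDecay_le : ∀ᶠ ζ in atTop, ∀ z : ℝ,
    levyM ν 2 ζ / 2 < z ^ 2 * levyM ν 4 ζ →
      Real.exp (-tiltedDecay ν ζ z / 2) ≤ (levyM ν 2 ζ)⁻¹ := by
  obtain ⟨c, hc, δ, hδ, le_decay⟩ := hν.exists_le_tiltedDecay
  filter_upwards [hν.eventually_levyM_four_le (δ / 2) (by positivity),
    hν.eventually_levyM_two_le (δ / 4) (by positivity),
    (tendsto_exp_mul_atTop (c := δ / 4) (by positivity)).eventually_ge_atTop (4 / c),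
    eventually_ge_atTop 0, hν.tendsto_levyM_two.eventually_gt_atTop 0]
    with ζ levyM_four_le levyM_two_le exp_ge hζ levyM_two_pos z hz
  set e := Real.exp (δ / 4 * ζ) with he
  have e_pos : 0 < e := Real.exp_pos _
  have exp_half : Real.exp (δ / 2 * ζ) = e ^ 2 := by rw [he, ← Real.exp_nat_mul]; ring_nf
  have exp_full : Real.exp (δ * ζ) = e ^ 4 := by rw [he, ← Real.exp_nat_mul]; ring_nf
  rw [exp_half] at levyM_four_le
  have sq_ge : 1 / 2 ≤ e ^ 2 * z ^ 2 := by
    refine le_of_mul_le_mul_right ?_ levyM_two_pos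
    nlinarith [mul_le_mul_of_nonneg_left levyM_four_le (sq_nonneg z)]
  have min_ge : 1 / 2 ≤ e ^ 2 * min 1 (z ^ 2) := by
    have one_le : 1 ≤ e := Real.one_le_exp (by positivity)
    rcases min_choice 1 (z ^ 2) with h | h <;> rw [h]
    · nlinarith
    · exact sq_ge
  have decay_ge : e ≤ tiltedDecay ν ζ z / 2 := by
    have one_le : 1 ≤ c / 4 * e := by rw [div_le_iff₀ hc] at exp_ge; linarith
    calc e ≤ c / 4 * e * e := le_mul_of_one_le_left e_pos.le one_le
      _ = c / 2 * e ^ 2 * (1 / 2) := by ring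
      _ ≤ c / 2 * e ^ 2 * (e ^ 2 * min 1 (z ^ 2)) := by gcongr
      _ = c * Real.exp (δ * ζ) * min 1 (z ^ 2) / 2 := by rw [exp_full]; ring
      _ ≤ _ := by gcongr; exact le_decay ζ hζ z
  rw [neg_div, Real.exp_neg]
  exact inv_anti₀ levyM_two_pos (levyM_two_le.trans (Real.exp_le_exp.2 decay_ge))

/-- Where `z² M₄ ≤ M₂ / 2` the quartic lower bound on `tiltedDecay` gives Gaussian decay. Elsewhere
half of the decay beats `M₂` and the other half provides integrability. -/
lemma exists_eventually_exp_neg_tiltedDecay_le : ∃ C : ℝ, ∀ᶠ ζ in atTop, ∀ z : ℝ,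
    Real.exp (-tiltedDecay ν ζ z) ≤
      Real.exp (-(1 / 4) * (z ^ 2 * levyM ν 2 ζ)) + C * (1 + z ^ 2 * levyM ν 2 ζ)⁻¹ := by
  obtain ⟨C, hC⟩ := hν.hasTiltedDecay
  have C_nonneg : 0 ≤ C := by simpa using (Real.exp_pos _).le.trans (hC 0 le_rfl 0)
  refine ⟨C, ?_⟩
  filter_upwards [hν.eventually_exp_neg_half_tiltedDecay_le, eventually_ge_atTop 0,
    hν.tendsto_levyM_two.eventually_ge_atTop 1] with ζ far hζ one_le z
  rcases lt_or_ge (levyM ν 2 ζ / 2) (z ^ 2 * levyM ν 4 ζ) with hz | hz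
  · refine le_add_of_nonneg_of_le (Real.exp_pos _).le ?_
    calc Real.exp (-tiltedDecay ν ζ z)
        = Real.exp (-tiltedDecay ν ζ z / 2) * Real.exp (-tiltedDecay ν ζ z / 2) := by
          rw [← Real.exp_add, add_halves]
      _ ≤ (levyM ν 2 ζ)⁻¹ * (C * (1 + z ^ 2)⁻¹) := by gcongr; exacts [far z hz, hC ζ hζ z]
      _ = C * (levyM ν 2 ζ + z ^ 2 * levyM ν 2 ζ)⁻¹ := by
          rw [mul_left_comm, ← mul_inv]; congr 2; ring
      _ ≤ _ := by gcongr
  · refine le_add_of_le_of_nonneg (Real.exp_le_exp.2 ?_) (by positivity)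
    linarith [hν.hasExpMoments.le_tiltedDecay ζ z, mul_le_mul_of_nonneg_left hz (sq_nonneg z),
      show z ^ 4 * levyM ν 4 ζ = z ^ 2 * (z ^ 2 * levyM ν 4 ζ) by ring]

lemma tendsto_exp_tiltedExponent_scaled (t : ℝ) :
    Tendsto (fun ζ => Complex.exp (tiltedExponent ν ζ (t / √(levyM ν 2 ζ)))) atTop
      (𝓝 ((Real.exp (-(1 / 2) * t ^ 2) : ℝ) : ℂ)) := by
  rw [Complex.ofReal_exp]
  refine (Complex.continuous_exp.tendsto _).comp ?_
  rw [tendsto_iff_norm_sub_tendsto_zero, Metric.tendsto_nhds]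
  intro ε hε
  obtain ⟨e, e_pos, he⟩ : ∃ e > 0, 2 * e * t ^ 2 + 2 / e * (t ^ 4 * 0) < ε := by
    refine ⟨ε / (4 * (t ^ 2 + 1)), by positivity, ?_⟩
    rw [mul_zero, mul_zero, add_zero, mul_div_assoc', div_mul_eq_mul_div,
      div_lt_iff₀ (by positivity)]
    nlinarith [mul_nonneg hε.le (sq_nonneg t)]
  have bound_tendsto := ((hν.tendsto_levyM_four_div.const_mul (t ^ 4)).const_mul (2 / e)).const_add
    (2 * e * t ^ 2)
  filter_upwards [bound_tendsto.eventually_lt_const he,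
    hν.tendsto_levyM_two.eventually_gt_atTop 0] with ζ bound_lt levyM_two_pos
  rw [Real.dist_0_eq_abs, abs_norm]
  refine lt_of_le_of_lt ?_ bound_lt
  have sq_eq : (t / √(levyM ν 2 ζ)) ^ 2 = t ^ 2 / levyM ν 2 ζ := by
    rw [div_pow, Real.sq_sqrt levyM_two_pos.le]
  have pow_four_eq : (t / √(levyM ν 2 ζ)) ^ 4 = t ^ 4 / levyM ν 2 ζ ^ 2 := by
    rw [show 4 = 2 * 2 from rfl, pow_mul, sq_eq, pow_mul, div_pow]
  have approx := hν.hasExpMoments.norm_tiltedExponent_add_le ζ (t / √(levyM ν 2 ζ)) e_pos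
  rw [pow_four_eq, sq_eq, div_mul_cancel₀ _ levyM_two_pos.ne'] at approx
  calc _ = ‖tiltedExponent ν ζ (t / √(levyM ν 2 ζ)) + ((t ^ 2 / 2 : ℝ) : ℂ)‖ := by
        congr 1; push_cast; ring
    _ ≤ _ := approx
    _ = _ := by ring

lemma tendsto_integral_norm_scaled_sub :
    Tendsto (fun ζ => ∫ t : ℝ, ‖Complex.exp (tiltedExponent ν ζ (t / √(levyM ν 2 ζ)))
      - (Real.exp (-(1 / 2) * t ^ 2) : ℝ)‖) atTop (𝓝 0) := by
  obtain ⟨C, hC⟩ := hν.exists_eventually_exp_neg_tiltedDecay_le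
  rw [← integral_zero ℝ ℝ]
  refine tendsto_integral_filter_of_dominated_convergence
    (fun t => (Real.exp (-(1 / 4) * t ^ 2) + C * (1 + t ^ 2)⁻¹) + Real.exp (-(1 / 2) * t ^ 2))
    (Eventually.of_forall fun ζ => ?_) ?_ ?_ (Eventually.of_forall fun t => ?_)
  · have := hν.hasExpMoments.continuous_tiltedExponent ζ
    exact Continuous.aestronglyMeasurable (by fun_prop)
  · filter_upwards [hC, hν.tendsto_levyM_two.eventually_gt_atTop 0] with ζ hζ levyM_two_pos
    refine Eventually.of_forall fun t => ?_
    rw [norm_norm]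
    refine norm_sub_le_of_le ?_ ?_
    · rw [Complex.norm_exp, hν.hasExpMoments.tiltedExponent_re]
      simpa only [div_pow, Real.sq_sqrt levyM_two_pos.le, div_mul_cancel₀ _ levyM_two_pos.ne']
        using hζ (t / √(levyM ν 2 ζ))
    · rw [Complex.norm_real, Real.norm_of_nonneg (Real.exp_pos _).le]
  · exact ((integrable_exp_neg_mul_sq (by norm_num)).add
      (integrable_inv_one_add_sq.const_mul C)).add (integrable_exp_neg_mul_sq (by norm_num))
  · exact tendsto_iff_norm_sub_tendsto_zero.1 (hν.tendsto_exp_tiltedExponent_scaled t)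

lemma integrable_exp_tiltedExponent {ζ : ℝ} (hζ : 0 ≤ ζ) :
    Integrable fun z : ℝ => Complex.exp (tiltedExponent ν ζ z) := by
  obtain ⟨C, hC⟩ := hν.hasTiltedDecay
  have := hν.hasExpMoments.continuous_tiltedExponent ζ
  refine (integrable_inv_one_add_sq.const_mul C).mono'
    (Continuous.aestronglyMeasurable (by fun_prop)) (Eventually.of_forall fun z => ?_)
  rw [Complex.norm_exp, hν.hasExpMoments.tiltedExponent_re]
  exact (Real.exp_le_exp.2 (by linarith [tiltedDecay_nonneg ν ζ z])).trans (hC ζ hζ z)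

lemma tendsto_scaled_tiltedInversion (B : ℝ) :
    Tendsto (fun q : ℝ × ℝ => (√(levyM ν 2 q.1) : ℂ) * tiltedInversion ν q.1 q.2)
      (atTop ×ˢ 𝓟 (Icc (-B) B)) (𝓝 (√(2 * Real.pi) : ℂ)) := by
  set K := ∫ t : ℝ, |t| * Real.exp (-(1 / 2) * t ^ 2)
  have linear_tendsto : Tendsto (fun ζ => B / √(levyM ν 2 ζ) * K) atTop (𝓝 0) := by
    simpa only [Function.comp_apply, zero_mul] using
      ((Real.tendsto_sqrt_atTop.comp hν.tendsto_levyM_two).const_div_atTop B).mul_const K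
  have bound_tendsto := hν.tendsto_integral_norm_scaled_sub.add linear_tendsto
  rw [add_zero] at bound_tendsto
  rw [tendsto_iff_norm_sub_tendsto_zero]
  refine squeeze_zero' (Eventually.of_forall fun _ => norm_nonneg _) ?_
    (bound_tendsto.comp tendsto_fst)
  rw [eventually_prod_principal_iff]
  filter_upwards [hν.tendsto_levyM_two.eventually_gt_atTop 0, eventually_ge_atTop 0]
    with ζ levyM_two_pos hζ a ha
  refine (norm_mul_tiltedInversion_sub_le (Real.sqrt_pos.2 levyM_two_pos)
    (hν.integrable_exp_tiltedExponent hζ) a).trans ?_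
  have abs_le := abs_le.2 ha
  have : 0 ≤ K := integral_nonneg fun t => by positivity
  dsimp only [Function.comp]
  gcongr

lemma tendsto_tiltedInversion_ratio (B : ℝ) :
    Tendsto (fun q : ℝ × ℝ => (tiltedInversion ν q.1 q.2).re / (tiltedInversion ν q.1 0).re)
      (atTop ×ˢ 𝓟 (Icc (-B) B)) (𝓝 1) := by
  have re_tendsto (B : ℝ) := (Complex.continuous_re.tendsto _).comp
    (hν.tendsto_scaled_tiltedInversion B)
  have at_zero : Tendsto (fun q : ℝ × ℝ => (q.1, (0 : ℝ))) (atTop ×ˢ 𝓟 (Icc (-B) B))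
      (atTop ×ˢ 𝓟 (Icc (-0) 0)) :=
    tendsto_fst.prodMk (tendsto_principal.2 (Eventually.of_forall fun _ => by simp))
  have limit_ne_zero : ((√(2 * Real.pi) : ℝ) : ℂ).re ≠ 0 := by
    rw [Complex.ofReal_re]
    positivity
  have ratio_tendsto := (re_tendsto B).div ((re_tendsto 0).comp at_zero) limit_ne_zero
  rw [div_self limit_ne_zero] at ratio_tendsto
  refine ratio_tendsto.congr' ?_
  filter_upwards [tendsto_fst.eventually (hν.tendsto_levyM_two.eventually_gt_atTop 0)]
    with q levyM_two_pos
  simp only [Pi.div_apply, Function.comp_apply, Complex.re_ofReal_mul]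
  exact mul_div_mul_left _ _ (Real.sqrt_pos.2 levyM_two_pos).ne'

lemma levyDensity_ratio_eq {x ζ : ℝ} (hζ : 0 ≤ ζ) (hx : levyM ν 1 ζ = x) (a : ℝ) :
    levyDensity ν (x + a) / levyDensity ν x * Real.exp (a * ζ) =
      (tiltedInversion ν ζ a).re / (tiltedInversion ν ζ 0).re := by
  have split : Real.exp (-(x + a) * ζ + levyM ν 0 ζ) * Real.exp (a * ζ) =
      Real.exp (-x * ζ + levyM ν 0 ζ) := by
    rw [← Real.exp_add]
    ring_nf
  rw [hν.hasExpMoments.levyDensity_eq hν.hasTiltedDecay _ hζ,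
    hν.hasExpMoments.levyDensity_eq hν.hasTiltedDecay _ hζ, hx, add_sub_cancel_left, sub_self,
    mul_div_mul_left _ _ (by positivity), div_mul_eq_mul_div, mul_right_comm, split,
    mul_div_mul_left _ _ (Real.exp_pos _).ne']

theorem tendsto_levyDensity_ratio {ζ : ℝ → ℝ}
    (hζ : ∀ x : ℝ, 0 ≤ x → 0 ≤ ζ x ∧ levyM ν 1 (ζ x) = x) (B : ℝ) :
    Tendsto (fun q : ℝ × ℝ =>
        levyDensity ν (q.1 + q.2) / levyDensity ν q.1 * Real.exp (q.2 * ζ q.1))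
      (atTop ×ˢ 𝓟 (Icc (-B) B)) (𝓝 1) := by
  have ζ_tendsto : Tendsto ζ atTop atTop := hν.hasExpMoments.tendsto_atTop_of_levyM_one_eq
    ((eventually_ge_atTop 0).mono fun x hx => (hζ x hx).2)
  refine ((hν.tendsto_tiltedInversion_ratio B).comp (ζ_tendsto.prodMap tendsto_id)).congr' ?_
  filter_upwards [tendsto_fst.eventually (eventually_ge_atTop (0 : ℝ))] with q hq
  exact (hν.levyDensity_ratio_eq (hζ q.1 hq).1 (hζ q.1 hq).2 q.2).symm

end SaddlePointRegular

end SaddlePoint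

section OrnsteinUhlenbeck

lemma hasExpMoments_of_integrable {μ : Measure ℝ}
    (hμint : Integrable (fun u : ℝ => min 1 (u ^ 2)) μ)
    (hμexp : ∀ C : ℝ, Integrable (fun u : ℝ => Real.exp (C * u)) (μ.restrict {u : ℝ | 1 ≤ |u|})) :
    HasExpMoments μ := by
  intro R
  have meas_large : MeasurableSet {u : ℝ | 1 ≤ |u|} :=
    measurableSet_le measurable_const (by fun_prop)
  have cont : Continuous fun v : ℝ => v ^ 2 * Real.exp (R * |v|) := by fun_prop
  rw [← integrableOn_univ, ← compl_union_self {u : ℝ | 1 ≤ |u|}]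
  refine IntegrableOn.union ?_ ?_
  · refine Integrable.mono' (hμint.const_mul (Real.exp |R|)).integrableOn
      cont.aestronglyMeasurable ?_
    refine (ae_restrict_iff' meas_large.compl).2 (Eventually.of_forall fun u hu => ?_)
    have abs_le : |u| ≤ 1 := le_of_lt (by simpa using hu)
    rw [Real.norm_of_nonneg (by positivity), min_eq_right ((sq_le_one_iff_abs_le_one u).2 abs_le),
      mul_comm]
    gcongr
    calc R * |u| ≤ |R| * |u| := by gcongr; exact le_abs_self R
      _ ≤ |R| := mul_le_of_le_one_right (abs_nonneg R) abs_le
  · refine Integrable.mono' (((hμexp (R + 1)).add (hμexp (-(R + 1)))).const_mul 2)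
      cont.aestronglyMeasurable (Eventually.of_forall fun u => ?_)
    have sq_le : u ^ 2 ≤ 2 * Real.exp |u| := by
      linarith [Real.quadratic_le_exp_of_nonneg (abs_nonneg u), abs_nonneg u, sq_abs u]
    have exp_le : Real.exp ((R + 1) * |u|) ≤
        Real.exp ((R + 1) * u) + Real.exp (-(R + 1) * u) := by
      rcases abs_choice u with h | h <;> rw [h]
      · exact le_add_of_nonneg_right (Real.exp_pos _).le
      · rw [mul_neg, ← neg_mul]
        exact le_add_of_nonneg_left (Real.exp_pos _).le
    rw [Real.norm_of_nonneg (by positivity)]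
    calc u ^ 2 * Real.exp (R * |u|) ≤ 2 * Real.exp |u| * Real.exp (R * |u|) := by gcongr
      _ = 2 * Real.exp ((R + 1) * |u|) := by rw [add_mul, Real.exp_add, one_mul]; ring
      _ ≤ _ := by gcongr; exact exp_le

lemma sigmaFinite_of_integrable_min_one_sq {μ : Measure ℝ} (hμ0 : μ {0} = 0)
    (hμint : Integrable (fun u : ℝ => min 1 (u ^ 2)) μ) : SigmaFinite μ := by
  refine ⟨⟨⟨fun n => {0} ∪ {u : ℝ | 1 / ((n : ℝ) + 1) ≤ ‖min 1 (u ^ 2)‖}, fun _ => trivial,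
    fun n => ?_, eq_univ_of_forall fun u => ?_⟩⟩⟩
  · refine (measure_union_le _ _).trans_lt ?_
    rw [hμ0, zero_add]
    exact hμint.measure_norm_ge_lt_top (by positivity)
  · rcases eq_or_ne u 0 with hu | hu
    · exact mem_iUnion.2 ⟨0, Or.inl hu⟩
    · have min_pos : 0 < min 1 (u ^ 2) := by positivity
      obtain ⟨n, hn⟩ := exists_nat_one_div_lt (norm_pos_iff.2 min_pos.ne')
      exact mem_iUnion.2 ⟨n, Or.inr hn.le⟩

/-- The Lévy measure of `∫_{-∞}^0 e^{λs} dZ_s`, where `Z` has Lévy measure `μ`: the image of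
`ds ⊗ μ` on `(-∞, 0] × ℝ` under `(s, u) ↦ e^{λs} u`. -/
noncomputable def ouLevyMeasure (μ : Measure ℝ) (lam : ℝ) : Measure ℝ :=
  ((volume.restrict (Iic (0 : ℝ))).prod μ).map fun q => Real.exp (lam * q.1) * q.2

lemma pow_mul_levyM_mul (μ : Measure ℝ) (k : ℕ) (c ξ : ℝ) :
    c ^ k * levyM μ k (c * ξ) = ∫ u, momentKernel k ξ (c * u) ∂μ := by
  simp only [levyM_eq_integral_momentKernel, momentKernel_mul, integral_const_mul]

variable {E : Type*} [NormedAddCommGroup E] {μ : Measure ℝ} {lam : ℝ}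

lemma exp_mul_le_one_of_nonpos (hlam : 0 < lam) {s : ℝ} (hs : s ≤ 0) : Real.exp (lam * s) ≤ 1 :=
  Real.exp_le_one_iff.2 (mul_nonpos_of_nonneg_of_nonpos hlam.le hs)

lemma integral_ouLevyMeasure_eq_integral_prod [NormedSpace ℝ E] (μ : Measure ℝ) (lam : ℝ)
    {f : ℝ → E} (hf : Continuous f) : ∫ v, f v ∂(ouLevyMeasure μ lam) =
      ∫ q, f (Real.exp (lam * q.1) * q.2) ∂((volume.restrict (Iic (0 : ℝ))).prod μ) :=
  integral_map (by fun_prop) hf.aestronglyMeasurable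

namespace HasExpMoments

variable (hμ : HasExpMoments μ) (hlam : 0 < lam)
include hμ hlam

lemma integrable_comp_exp_mul {f : ℝ → E} (hf : Continuous f) (hbound : QuadExpBound f) :
    Integrable (fun q : ℝ × ℝ => f (Real.exp (lam * q.1) * q.2))
      ((volume.restrict (Iic (0 : ℝ))).prod μ) := by
  obtain ⟨C, R, hCR⟩ := hbound
  have int_exp : Integrable (fun s : ℝ => Real.exp (2 * lam * s)) (volume.restrict (Iic (0 : ℝ))) :=
    integrableOn_exp_mul_Iic (by positivity) 0
  have ae_nonpos : ∀ᵐ q ∂((volume.restrict (Iic (0 : ℝ))).prod μ), q.1 ≤ 0 :=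
    Measure.quasiMeasurePreserving_fst.ae (ae_restrict_mem measurableSet_Iic)
  refine (int_exp.mul_prod ((hμ |R|).const_mul |C|)).mono'
    (Continuous.aestronglyMeasurable (by fun_prop)) ?_
  filter_upwards [ae_nonpos] with q hq
  have abs_le : |Real.exp (lam * q.1) * q.2| ≤ |q.2| := by
    rw [abs_mul, abs_of_pos (Real.exp_pos _)]
    exact mul_le_of_le_one_left (abs_nonneg _) (exp_mul_le_one_of_nonpos hlam hq)
  calc _ ≤ C * ((Real.exp (lam * q.1) * q.2) ^ 2
          * Real.exp (R * |Real.exp (lam * q.1) * q.2|)) := hCR _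
    _ ≤ |C| * ((Real.exp (lam * q.1) * q.2) ^ 2 * Real.exp (|R| * |q.2|)) := by
      gcongr <;> exact le_abs_self _
    _ = Real.exp (2 * lam * q.1) * (|C| * (q.2 ^ 2 * Real.exp (|R| * |q.2|))) := by
      rw [mul_assoc 2, two_mul, Real.exp_add]
      ring

protected lemma ouLevyMeasure : HasExpMoments (ouLevyMeasure μ lam) := by
  intro R
  have cont : Continuous fun v : ℝ => v ^ 2 * Real.exp (R * |v|) := by fun_prop
  refine (integrable_map_measure cont.aestronglyMeasurable (by fun_prop)).2
    (hμ.integrable_comp_exp_mul hlam cont ⟨1, R, fun v => ?_⟩)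
  rw [Real.norm_of_nonneg (by positivity), one_mul]

variable [SFinite μ]

lemma integral_ouLevyMeasure [NormedSpace ℝ E] {f : ℝ → E} (hf : Continuous f)
    (hbound : QuadExpBound f) : ∫ v, f v ∂(ouLevyMeasure μ lam) =
      ∫ s in Iic (0 : ℝ), ∫ u, f (Real.exp (lam * s) * u) ∂μ := by
  rw [integral_ouLevyMeasure_eq_integral_prod μ lam hf,
    integral_prod _ (hμ.integrable_comp_exp_mul hlam hf hbound)]

lemma levyExponent_ouLevyMeasure (w : ℂ) :
    levyExponent (ouLevyMeasure μ lam) w = ouPsi μ lam w :=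
  hμ.integral_ouLevyMeasure hlam (continuous_levyKernel w) (quadExpBound_levyKernel w)

lemma levyM_ouLevyMeasure (k : ℕ) (ζ : ℝ) :
    levyM (ouLevyMeasure μ lam) k ζ = ouM μ lam k ζ := by
  simp only [ouM, pow_mul_levyM_mul]
  rw [levyM_eq_integral_momentKernel]
  exact hμ.integral_ouLevyMeasure hlam (continuous_momentKernel k ζ)
    (quadExpBound_momentKernel k ζ)

lemma integrableOn_pow_mul_levyM (k : ℕ) (ζ : ℝ) : IntegrableOn
    (fun s : ℝ => Real.exp (lam * s) ^ k * levyM μ k (Real.exp (lam * s) * ζ)) (Iic 0) := by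
  simp only [pow_mul_levyM_mul]
  exact (hμ.integrable_comp_exp_mul hlam (continuous_momentKernel k ζ)
    (quadExpBound_momentKernel k ζ)).integral_prod_left

end HasExpMoments

end OrnsteinUhlenbeck

section MomentGrowth

lemma eventually_le_of_tendsto_log_add_log_log_div {f g : ℝ → ℝ} (hg : Tendsto g atTop atTop)
    (hlim : Tendsto (fun ξ => (Real.log (max (f ξ / g ξ) 1) + Real.log (Real.log (g ξ))) / ξ)
      atTop (nhds 0)) {ε : ℝ} (hε : 0 < ε) :
    ∀ᶠ ξ in atTop, f ξ ≤ Real.exp (ε * ξ) * g ξ ∧ g ξ ≤ Real.exp (Real.exp (ε * ξ)) := by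
  filter_upwards [hlim.eventually_lt_const hε, hg.eventually_ge_atTop (Real.exp 1),
    eventually_gt_atTop 0] with ξ quotient_lt exp_one_le ξ_pos
  have g_pos : 0 < g ξ := (Real.exp_pos 1).trans_le exp_one_le
  have one_le_log : 1 ≤ Real.log (g ξ) := (Real.le_log_iff_exp_le g_pos).2 exp_one_le
  have log_max_nonneg : 0 ≤ Real.log (max (f ξ / g ξ) 1) := Real.log_nonneg (le_max_right _ _)
  have log_log_nonneg : 0 ≤ Real.log (Real.log (g ξ)) := Real.log_nonneg one_le_log
  rw [div_lt_iff₀ ξ_pos] at quotient_lt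
  constructor
  · refine (div_le_iff₀ g_pos).1 ((le_max_left _ 1).trans ?_)
    exact (Real.log_le_iff_le_exp (by positivity)).1 (by linarith)
  · refine (Real.log_le_iff_le_exp g_pos).1 ?_
    exact (Real.log_le_iff_le_exp (by linarith)).1 (by linarith)

variable {μ : Measure ℝ} {lam : ℝ}

lemma ouM_nonneg (μ : Measure ℝ) (lam : ℝ) {k : ℕ} (hk : Even k) (ζ : ℝ) :
    0 ≤ ouM μ lam k ζ :=
  integral_nonneg fun _ => mul_nonneg (by positivity) (levyM_nonneg μ hk _)

variable [SFinite μ]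

lemma ouLevyMeasure_Ioi_zero (μ : Measure ℝ) [SFinite μ] (lam : ℝ) :
    ouLevyMeasure μ lam (Ioi 0) = ⊤ * μ (Ioi 0) := by
  have preimage : (fun q : ℝ × ℝ => Real.exp (lam * q.1) * q.2) ⁻¹' Ioi 0 = univ ×ˢ Ioi 0 := by
    ext q
    simp [Real.exp_pos]
  rw [ouLevyMeasure, Measure.map_apply (by fun_prop) measurableSet_Ioi, preimage,
    Measure.prod_prod, Measure.restrict_apply_univ, Real.volume_Iic]

namespace HasExpMoments

variable (hμ : HasExpMoments μ) (hlam : 0 < lam)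
include hμ hlam

lemma tendsto_ouM_two (hpos : 0 < μ (Ioi 0)) : Tendsto (ouM μ lam 2) atTop atTop := by
  have pos : 0 < ouLevyMeasure μ lam (Ioi 0) := by
    rw [ouLevyMeasure_Ioi_zero, ENNReal.top_mul hpos.ne']
    exact ENNReal.zero_lt_top
  exact ((hμ.ouLevyMeasure hlam).tendsto_levyM_two pos).congr (hμ.levyM_ouLevyMeasure hlam 2)

lemma ouM_two_le_add {a b : ℝ} (ha : 0 ≤ a) (hab : a ≤ b) :
    ouM μ lam 2 a ≤ ouM μ lam 2 b + ouM μ lam 2 0 := by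
  simpa only [hμ.levyM_ouLevyMeasure hlam] using
    (hμ.ouLevyMeasure hlam).levyM_le_add even_two ha hab

lemma ouM_le {k : ℕ} {ζ θ K L : ℝ} (hle : ∀ s ≤ 0,
      Real.exp (lam * s) ^ k * levyM μ k (Real.exp (lam * s) * ζ) ≤
        K * (Real.exp (lam * s) ^ 2 * levyM μ 2 (Real.exp (lam * s) * θ))
          + L * Real.exp (lam * s) ^ 2) :
    ouM μ lam k ζ ≤ K * ouM μ lam 2 θ + L / (2 * lam) := by
  have exp_sq (s : ℝ) : Real.exp (lam * s) ^ 2 = Real.exp (2 * lam * s) := by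
    rw [← Real.exp_nat_mul, Nat.cast_two, mul_assoc]
  have int_two := (hμ.integrableOn_pow_mul_levyM hlam 2 θ).const_mul K
  have int_sq : IntegrableOn (fun s : ℝ => L * Real.exp (lam * s) ^ 2) (Iic 0) := by
    simp only [exp_sq]
    exact (integrableOn_exp_mul_Iic (by positivity) 0).const_mul L
  calc ouM μ lam k ζ ≤ _ := setIntegral_mono_on (hμ.integrableOn_pow_mul_levyM hlam k ζ)
        (int_two.add int_sq) measurableSet_Iic hle
    _ = K * ouM μ lam 2 θ + L * ∫ s in Iic (0 : ℝ), Real.exp (2 * lam * s) := by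
      simp only [Pi.add_apply]
      rw [integral_add int_two int_sq, integral_const_mul, integral_const_mul, ouM]
      simp only [exp_sq]
    _ = K * ouM μ lam 2 θ + L / (2 * lam) := by
      rw [integral_exp_mul_Iic (by positivity), mul_zero, Real.exp_zero, mul_one_div]

/-- Averaging over the times `y` just before `s` during which `e^{λy}` stays above `γ e^{λs}`. -/
lemma sq_mul_levyM_two_le {γ : ℝ} (hγ : γ ∈ Ioo (0 : ℝ) 1) {ζ s : ℝ} (hζ : 0 ≤ ζ) (hs : s ≤ 0) :
    (γ * Real.exp (lam * s)) ^ 2 * levyM μ 2 (γ * Real.exp (lam * s) * ζ) * (-Real.log γ / lam) ≤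
      ouM μ lam 2 ζ + ouM μ lam 2 0 := by
  have := hγ.1
  have log_nonpos : Real.log γ ≤ 0 := Real.log_nonpos hγ.1.le hγ.2.le
  have length : (volume.restrict (Iic (0 : ℝ))).real (Ioc (s + Real.log γ / lam) s)
      = -Real.log γ / lam := by
    rw [measureReal_restrict_apply measurableSet_Ioc,
      inter_eq_left.2 fun y hy => mem_Iic.2 (hy.2.trans hs), Real.volume_real_Ioc_of_le]
    · ring
    · linarith [div_nonpos_of_nonpos_of_nonneg log_nonpos hlam.le]
  have integrable := hμ.integrableOn_pow_mul_levyM hlam 2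
  rw [← length]
  refine (mul_measureReal_le_integral ((integrable ζ).add (integrable 0)) (Eventually.of_forall
    fun y => ?_) measurableSet_Ioc ?_ (Eventually.of_forall fun y hy => ?_)).trans_eq
      (integral_add (integrable ζ) (integrable 0))
  · exact add_nonneg (mul_nonneg (by positivity) (levyM_nonneg μ even_two _))
      (mul_nonneg (by positivity) (levyM_nonneg μ even_two _))
  · exact ((Measure.restrict_apply_le _ _).trans_lt measure_Ioc_lt_top).ne
  · have le_exp : γ * Real.exp (lam * s) ≤ Real.exp (lam * y) := by
      nth_rw 1 [← Real.exp_log hγ.1, ← Real.exp_add]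
      have := mul_le_mul_of_nonneg_left hy.1.le hlam.le
      rw [mul_add, mul_div_cancel₀ _ hlam.ne'] at this
      exact Real.exp_le_exp.2 (by linarith)
    have levyM_le := hμ.levyM_le_add even_two (mul_nonneg (by positivity) hζ)
      (mul_le_mul_of_nonneg_right le_exp hζ)
    rw [Pi.add_apply, mul_zero, ← mul_add]
    exact mul_le_mul (by gcongr) levyM_le (levyM_nonneg μ even_two _) (by positivity)

lemma exists_sq_mul_levyM_two_le {γ : ℝ} (hγ : γ ∈ Ioo (0 : ℝ) 1) :
    ∃ K > 0, ∀ ζ, 0 ≤ ζ → ∀ s ≤ 0,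
      Real.exp (lam * s) ^ 2 * levyM μ 2 (γ * (Real.exp (lam * s) * ζ)) ≤
        K * (ouM μ lam 2 ζ + ouM μ lam 2 0) := by
  have := hγ.1
  have := neg_pos.2 (Real.log_neg hγ.1 hγ.2)
  refine ⟨(γ ^ 2 * (-Real.log γ / lam))⁻¹, by positivity, fun ζ hζ s hs => ?_⟩
  rw [← div_eq_inv_mul, le_div_iff₀' (by positivity), ← mul_assoc γ]
  calc _ = _ := by ring
    _ ≤ _ := hμ.sq_mul_levyM_two_le hlam hγ hζ hs

lemma exists_ouM_four_le {γ : ℝ} (hγ : γ ∈ Ioo (0 : ℝ) 1) : ∃ K > 0, ∀ ε L, 0 ≤ ε → 0 ≤ L →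
    (∀ ξ, 0 ≤ ξ → levyM μ 4 ξ ≤ ε * levyM μ 2 (γ * ξ) ^ 2 + L) →
    ∀ ζ, 0 ≤ ζ → ouM μ lam 4 ζ ≤
      ε * K * (ouM μ lam 2 ζ + ouM μ lam 2 0) ^ 2 + L / (2 * lam) := by
  obtain ⟨K, K_pos, window⟩ := hμ.exists_sq_mul_levyM_two_le hlam hγ
  refine ⟨K, K_pos, fun ε L hε hL levyM_four_le ζ hζ => ?_⟩
  have S_nonneg := add_nonneg (ouM_nonneg μ lam even_two ζ) (ouM_nonneg μ lam even_two 0)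
  set S := ouM μ lam 2 ζ + ouM μ lam 2 0
  have ouM_four_le : ouM μ lam 4 ζ ≤ ε * (K * S) * ouM μ lam 2 (γ * ζ) + L / (2 * lam) := by
    refine hμ.ouM_le hlam fun s hs => ?_
    have window_s := window ζ hζ s hs
    have exp_le_one := exp_mul_le_one_of_nonpos hlam hs
    have levyM_four_le_s := levyM_four_le (Real.exp (lam * s) * ζ) (by positivity)
    have levyM_two_nonneg := levyM_nonneg μ even_two (γ * (Real.exp (lam * s) * ζ))
    rw [mul_left_comm _ γ ζ]
    set e := Real.exp (lam * s)
    have e_pos : 0 < e := Real.exp_pos _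
    set M := levyM μ 2 (γ * (e * ζ))
    calc e ^ 4 * levyM μ 4 (e * ζ) ≤ e ^ 4 * (ε * M ^ 2 + L) := by gcongr
      _ = ε * (e ^ 2 * M) * (e ^ 2 * M) + L * (e ^ 2 * e ^ 2) := by ring
      _ ≤ ε * (K * S) * (e ^ 2 * M) + L * (e ^ 2 * 1) := by
        gcongr
        exact pow_le_one₀ e_pos.le exp_le_one
      _ = _ := by rw [mul_one]
  have ouM_two_le : ouM μ lam 2 (γ * ζ) ≤ S :=
    hμ.ouM_two_le_add hlam (mul_nonneg hγ.1.le hζ) (mul_le_of_le_one_left hζ hγ.2.le)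
  calc _ ≤ ε * (K * S) * ouM μ lam 2 (γ * ζ) + L / (2 * lam) := ouM_four_le
    _ ≤ ε * (K * S) * S + L / (2 * lam) := by gcongr
    _ = ε * K * S ^ 2 + L / (2 * lam) := by ring

lemma tendsto_ouM_four_div {γ : ℝ} (hγ : γ ∈ Ioo (0 : ℝ) 1) (hpos : 0 < μ (Ioi 0))
    (hT1 : Tendsto (fun ξ => levyM μ 4 ξ / levyM μ 2 (γ * ξ) ^ 2) atTop (nhds 0)) :
    Tendsto (fun ζ => ouM μ lam 4 ζ / ouM μ lam 2 ζ ^ 2) atTop (nhds 0) := by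
  obtain ⟨K, K_pos, ouM_four_le⟩ := hμ.exists_ouM_four_le hlam hγ
  have lim_two := hμ.tendsto_ouM_two hlam hpos
  refine (tendsto_order.2 ⟨fun a ha => Eventually.of_forall fun ζ => ha.trans_le ?_,
    fun ε hε => ?_⟩)
  · exact div_nonneg (ouM_nonneg μ lam (by decide) ζ) (sq_nonneg _)
  have four_le : ∀ᶠ ξ in atTop, levyM μ 4 ξ ≤ ε / (8 * K) * levyM μ 2 (γ * ξ) ^ 2 := by
    have lim_gamma := (hμ.tendsto_levyM_two hpos).comp (tendsto_id.const_mul_atTop hγ.1)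
    filter_upwards [hT1.eventually_lt_const (by positivity : 0 < ε / (8 * K)),
      lim_gamma.eventually_gt_atTop 0] with ξ quotient_lt pos
    exact ((div_lt_iff₀ (pow_pos pos 2)).1 quotient_lt).le
  obtain ⟨L, hL, four_le_add⟩ :=
    hμ.exists_levyM_le_add (k := 4) (by decide) (fun _ => by positivity) four_le
  filter_upwards [eventually_ge_atTop 0, lim_two.eventually_ge_atTop (ouM μ lam 2 0),
    lim_two.eventually_gt_atTop 0,
    ((tendsto_pow_atTop two_ne_zero).comp lim_two).eventually_gt_atTop (L / (2 * lam) / (ε / 2))]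
    with ζ hζ zero_le two_pos L_lt
  have L_lt : L / (2 * lam) < ouM μ lam 2 ζ ^ 2 * (ε / 2) := (div_lt_iff₀ (by positivity)).1 L_lt
  have := ouM_nonneg μ lam even_two 0
  rw [div_lt_iff₀ (by positivity)]
  calc ouM μ lam 4 ζ
      ≤ ε / (8 * K) * K * (ouM μ lam 2 ζ + ouM μ lam 2 0) ^ 2 + L / (2 * lam) :=
        ouM_four_le _ L (by positivity) hL four_le_add ζ hζ
    _ ≤ ε / (8 * K) * K * (ouM μ lam 2 ζ + ouM μ lam 2 ζ) ^ 2 + L / (2 * lam) := by gcongr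
    _ = ε / 2 * ouM μ lam 2 ζ ^ 2 + L / (2 * lam) := by field_simp; ring
    _ < ε * ouM μ lam 2 ζ ^ 2 := by linarith

lemma eventually_ouM_four_le (hpos : 0 < μ (Ioi 0))
    (hT2 : ∀ ε > 0, ∀ᶠ ξ in atTop, levyM μ 4 ξ ≤ Real.exp (ε * ξ) * levyM μ 2 ξ) {ε : ℝ}
    (hε : 0 < ε) : ∀ᶠ ζ in atTop, ouM μ lam 4 ζ ≤ Real.exp (ε * ζ) * ouM μ lam 2 ζ := by
  obtain ⟨L, _, four_le_add⟩ := hμ.exists_levyM_le_add (k := 4) (by decide)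
    (fun ξ => mul_nonneg (Real.exp_pos _).le (levyM_nonneg μ even_two ξ)) (hT2 _ (half_pos hε))
  filter_upwards [eventually_ge_atTop 0, (hμ.tendsto_ouM_two hlam hpos).eventually_ge_atTop
      (L / (2 * lam)), (tendsto_exp_mul_atTop (half_pos hε)).eventually_ge_atTop 2]
    with ζ hζ L_le two_le
  have ouM_four_le : ouM μ lam 4 ζ ≤
      Real.exp (ε / 2 * ζ) * ouM μ lam 2 ζ + L / (2 * lam) := by
    refine hμ.ouM_le hlam fun s hs => ?_
    have exp_le_one := exp_mul_le_one_of_nonpos hlam hs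
    have four_le := four_le_add (Real.exp (lam * s) * ζ) (by positivity)
    set e := Real.exp (lam * s)
    have e_pos : 0 < e := Real.exp_pos _
    have := levyM_nonneg μ even_two (e * ζ)
    have pow_le : e ^ 4 ≤ e ^ 2 := pow_le_pow_of_le_one e_pos.le exp_le_one (by norm_num)
    calc e ^ 4 * levyM μ 4 (e * ζ)
        ≤ e ^ 2 * (Real.exp (ε / 2 * (1 * ζ)) * levyM μ 2 (e * ζ) + L) := by
          refine mul_le_mul pow_le (four_le.trans ?_) (levyM_nonneg μ (by decide) _) (by positivity)
          gcongr
      _ = _ := by rw [one_mul]; ring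
  have ouM_two_nonneg := ouM_nonneg μ lam even_two ζ
  calc ouM μ lam 4 ζ ≤ Real.exp (ε / 2 * ζ) * ouM μ lam 2 ζ + ouM μ lam 2 ζ := by linarith
    _ = (Real.exp (ε / 2 * ζ) + 1) * ouM μ lam 2 ζ := by ring
    _ ≤ Real.exp (ε / 2 * ζ) * Real.exp (ε / 2 * ζ) * ouM μ lam 2 ζ := by gcongr; nlinarith
    _ = Real.exp (ε * ζ) * ouM μ lam 2 ζ := by rw [← Real.exp_add]; ring_nf

lemma eventually_ouM_two_le
    (hT2 : ∀ ε > 0, ∀ᶠ ξ in atTop, levyM μ 2 ξ ≤ Real.exp (Real.exp (ε * ξ))) {ε : ℝ}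
    (hε : 0 < ε) : ∀ᶠ ζ in atTop, ouM μ lam 2 ζ ≤ Real.exp (Real.exp (ε * ζ)) := by
  have lim_exp := tendsto_exp_mul_atTop (half_pos hε)
  have lim_exp_exp := Real.tendsto_exp_atTop.comp lim_exp
  filter_upwards [eventually_ge_atTop 0, hT2 _ (half_pos hε), lim_exp.eventually_ge_atTop 2,
    lim_exp_exp.eventually_ge_atTop (levyM μ 2 0), lim_exp_exp.eventually_ge_atTop (1 / lam)]
    with ζ hζ two_le_exp two_le zero_le inv_le
  have ouM_two_le : ouM μ lam 2 ζ ≤ 0 * ouM μ lam 2 ζ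
      + (levyM μ 2 ζ + levyM μ 2 0) / (2 * lam) := by
    refine hμ.ouM_le hlam fun s hs => ?_
    have exp_le_one := exp_mul_le_one_of_nonpos hlam hs
    rw [zero_mul, zero_add, mul_comm]
    gcongr
    exact hμ.levyM_le_add even_two (by positivity) (mul_le_of_le_one_left hζ exp_le_one)
  have exp_two_mul : 2 * Real.exp (ε / 2 * ζ) ≤ Real.exp (ε * ζ) := by
    calc _ ≤ Real.exp (ε / 2 * ζ) * Real.exp (ε / 2 * ζ) := by gcongr
      _ = Real.exp (ε * ζ) := by rw [← Real.exp_add]; ring_nf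
  set D := Real.exp (Real.exp (ε / 2 * ζ)) with hD
  have D_pos : 0 < D := Real.exp_pos _
  calc ouM μ lam 2 ζ ≤ (levyM μ 2 ζ + levyM μ 2 0) / (2 * lam) := by linarith
    _ ≤ (D + D) / (2 * lam) := by gcongr; exact zero_le
    _ = 1 / lam * D := by field_simp; ring
    _ ≤ D * D := by gcongr; exact inv_le
    _ ≤ Real.exp (Real.exp (ε * ζ)) := by
      rw [hD, ← Real.exp_add, ← two_mul]
      exact Real.exp_le_exp.2 exp_two_mul

end HasExpMoments

end MomentGrowth

section Oscillation

lemma sq_div_eight_le_one_sub_cos {x : ℝ} (hx : |x| ≤ 2) : x ^ 2 / 8 ≤ 1 - Real.cos x := by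
  have jordan := Real.cos_le_one_sub_mul_cos_sq (hx.trans (by linarith [Real.pi_gt_three]))
  have eighth_le : 1 / 8 ≤ 2 / Real.pi ^ 2 := by
    rw [div_le_div_iff₀ (by norm_num) (by positivity)]
    nlinarith [Real.pi_gt_three, Real.pi_le_four]
  linarith [mul_le_mul_of_nonneg_right eighth_le (sq_nonneg x)]

variable {lam : ℝ}

lemma hasDerivAt_sin_sub_one_mul_exp_neg {b : ℝ} (hb : b ≠ 0) (hlam : lam ≠ 0) (s : ℝ) :
    HasDerivAt
      (fun s => (Real.sin (b * Real.exp (lam * s)) - 1) * Real.exp (-(lam * s)) / (b * lam))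
      (Real.cos (b * Real.exp (lam * s))
        + (1 - Real.sin (b * Real.exp (lam * s))) * Real.exp (-(lam * s)) / b) s := by
  have linear : HasDerivAt (fun s : ℝ => lam * s) lam s := hasDerivAt_const_mul lam
  refine ((((linear.exp.const_mul b).sin.sub_const 1).mul linear.fun_neg.exp).div_const
    (b * lam)).congr_deriv ?_
  have exp_mul_exp_neg : Real.exp (lam * s) * Real.exp (-(lam * s)) = 1 := by
    rw [← Real.exp_add, add_neg_cancel, Real.exp_zero]
  field_simp
  linear_combination b * Real.cos (b * Real.exp (lam * s)) * exp_mul_exp_neg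

lemma integral_cos_mul_exp_le {b T : ℝ} (hb : 0 < b) (hlam : 0 < lam) (hT : 0 ≤ T) :
    ∫ s in (-T)..0, Real.cos (b * Real.exp (lam * s)) ≤ 2 * Real.exp (lam * T) / (b * lam) := by
  have cont_deriv : Continuous fun s => Real.cos (b * Real.exp (lam * s))
      + (1 - Real.sin (b * Real.exp (lam * s))) * Real.exp (-(lam * s)) / b := by fun_prop
  calc ∫ s in (-T)..0, Real.cos (b * Real.exp (lam * s))
      ≤ ∫ s in (-T)..0, (Real.cos (b * Real.exp (lam * s))
        + (1 - Real.sin (b * Real.exp (lam * s))) * Real.exp (-(lam * s)) / b) := by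
        refine intervalIntegral.integral_mono_on (by linarith)
          (Continuous.intervalIntegrable (by fun_prop) _ _) (cont_deriv.intervalIntegrable _ _)
          fun s _ => le_add_of_nonneg_right ?_
        have := sub_nonneg.2 (Real.sin_le_one (b * Real.exp (lam * s)))
        positivity
    _ = ((1 - Real.sin (b * Real.exp (lam * -T))) * Real.exp (lam * T)
        - (1 - Real.sin (b * Real.exp (lam * 0))) * Real.exp (-(lam * 0))) / (b * lam) := by
      rw [intervalIntegral.integral_eq_sub_of_hasDerivAt
        (fun s _ => hasDerivAt_sin_sub_one_mul_exp_neg hb.ne' hlam.ne' s)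
        (cont_deriv.intervalIntegrable _ _), mul_neg lam T, neg_neg]
      ring
    _ ≤ 2 * Real.exp (lam * T) / (b * lam) := by
      have := sub_nonneg.2 (Real.sin_le_one (b * Real.exp (lam * 0)))
      have : 0 ≤ (1 - Real.sin (b * Real.exp (lam * 0))) * Real.exp (-(lam * 0)) := by positivity
      have : (1 - Real.sin (b * Real.exp (lam * -T))) * Real.exp (lam * T)
          ≤ 2 * Real.exp (lam * T) := by
        gcongr
        linarith [Real.neg_one_le_sin (b * Real.exp (lam * -T))]
      gcongr
      linarith

lemma le_integral_one_sub_cos_mul_exp {b T : ℝ} (hb : 0 < b) (hlam : 0 < lam) (hT : 0 ≤ T) :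
    T - 2 * Real.exp (lam * T) / (b * lam) ≤
      ∫ s in (-T)..0, (1 - Real.cos (b * Real.exp (lam * s))) := by
  rw [intervalIntegral.integral_sub (Continuous.intervalIntegrable (by fun_prop) _ _)
    (Continuous.intervalIntegrable (by fun_prop) _ _), intervalIntegral.integral_const,
    smul_eq_mul, mul_one]
  linarith [integral_cos_mul_exp_le hb hlam hT]

/-- The contribution to `tiltedDecay (ouLevyMeasure μ lam) ζ z` of the jump `u` at time `s`. -/
noncomputable def flowDecay (lam ζ z u s : ℝ) : ℝ :=
  Real.exp (ζ * (Real.exp (lam * s) * u)) * (1 - Real.cos (z * (Real.exp (lam * s) * u)))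

lemma flowDecay_nonneg (lam ζ z u s : ℝ) : 0 ≤ flowDecay lam ζ z u s :=
  mul_nonneg (Real.exp_pos _).le (sub_nonneg.2 (Real.cos_le_one _))

lemma continuous_flowDecay (lam ζ z u : ℝ) : Continuous (flowDecay lam ζ z u) := by
  unfold flowDecay
  fun_prop

lemma exp_mul_le_integral_flowDecay (hlam : 0 < lam) {ζ z u T δ : ℝ} (hu : 0 < u) (hz : z ≠ 0)
    (hT : 0 ≤ T) (hζ : 0 ≤ ζ) (hδ : δ ≤ Real.exp (-(lam * T)) * u) :
    Real.exp (ζ * δ) * (T - 2 * Real.exp (lam * T) / (|z| * u * lam)) ≤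
      ∫ s in (-T)..0, flowDecay lam ζ z u s := by
  have := abs_pos.2 hz
  calc _ ≤ Real.exp (ζ * δ) * ∫ s in (-T)..0, (1 - Real.cos (|z| * u * Real.exp (lam * s))) := by
        gcongr
        exact le_integral_one_sub_cos_mul_exp (by positivity) hlam hT
    _ = ∫ s in (-T)..0, Real.exp (ζ * δ) * (1 - Real.cos (|z| * u * Real.exp (lam * s))) :=
      (intervalIntegral.integral_const_mul _ _).symm
    _ ≤ ∫ s in (-T)..0, flowDecay lam ζ z u s := by
      refine intervalIntegral.integral_mono_on (by linarith)
        (Continuous.intervalIntegrable (by fun_prop) _ _)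
        ((continuous_flowDecay lam ζ z u).intervalIntegrable _ _) fun s hs => ?_
      have δ_le : δ ≤ Real.exp (lam * s) * u := by
        refine hδ.trans ?_
        gcongr
        linarith [mul_le_mul_of_nonneg_left hs.1 hlam.le]
      have cos_eq : Real.cos (|z| * u * Real.exp (lam * s))
          = Real.cos (z * (Real.exp (lam * s) * u)) := by
        have flow_pos : 0 < Real.exp (lam * s) * u := by positivity
        rw [← Real.cos_abs (z * _), abs_mul, abs_of_pos flow_pos]
        ring_nf
      rw [cos_eq, flowDecay]
      have := sub_nonneg.2 (Real.cos_le_one (z * (Real.exp (lam * s) * u)))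
      gcongr

lemma exp_mul_sq_le_integral_flowDecay (hlam : 0 < lam) {ζ z u δ : ℝ} (hu : 0 < u) (hζ : 0 ≤ ζ)
    (hδ : 0 ≤ δ) (hδu : δ ≤ Real.exp (-3) * u) (hzu : |z| * u ≤ 2 * Real.exp 2) :
    Real.exp (ζ * δ) * ((z * δ) ^ 2 / 8) / lam ≤
      ∫ s in (-(3 / lam))..(-(2 / lam)), flowDecay lam ζ z u s := by
  have window_le : -(3 / lam) ≤ -(2 / lam) := by gcongr; norm_num
  calc _ = ∫ _ in (-(3 / lam))..(-(2 / lam)), Real.exp (ζ * δ) * ((z * δ) ^ 2 / 8) := by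
        rw [intervalIntegral.integral_const, smul_eq_mul]
        ring
    _ ≤ _ := by
      refine intervalIntegral.integral_mono_on window_le (continuous_const.intervalIntegrable _ _)
        ((continuous_flowDecay lam ζ z u).intervalIntegrable _ _) fun s hs => ?_
      have exp_ge : Real.exp (-3) ≤ Real.exp (lam * s) := by
        have := mul_le_mul_of_nonneg_left hs.1 hlam.le
        rw [mul_neg, mul_div_cancel₀ _ hlam.ne'] at this
        exact Real.exp_le_exp.2 this
      have exp_le : Real.exp (lam * s) ≤ Real.exp (-2) := by
        have := mul_le_mul_of_nonneg_left hs.2 hlam.le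
        rw [mul_neg, mul_div_cancel₀ _ hlam.ne'] at this
        exact Real.exp_le_exp.2 this
      have δ_le : δ ≤ Real.exp (lam * s) * u := hδu.trans (by gcongr)
      have phase_le : |z * (Real.exp (lam * s) * u)| ≤ 2 := by
        rw [abs_mul, abs_of_pos (by positivity : 0 < Real.exp (lam * s) * u)]
        calc _ = Real.exp (lam * s) * (|z| * u) := by ring
          _ ≤ Real.exp (-2) * (2 * Real.exp 2) := by gcongr
          _ = 2 := by rw [mul_left_comm, ← Real.exp_add]; norm_num
      have sq_le : (z * δ) ^ 2 / 8 ≤ (z * (Real.exp (lam * s) * u)) ^ 2 / 8 := by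
        rw [mul_pow, mul_pow z]
        gcongr
      exact mul_le_mul (by gcongr) (sq_le.trans (sq_div_eight_le_one_sub_cos phase_le))
        (by positivity) (Real.exp_pos _).le

/-- If `|z| u` is large, the phase `z e^{λs} u` oscillates during `-2/λ ≤ s ≤ 0`; otherwise it stays
in `[-2, 2]` during `-3/λ ≤ s ≤ -2/λ`, where `1 - cos` is comparable to the square. -/
lemma exists_min_le_integral_flowDecay (hlam : 0 < lam) {ζ z u δ : ℝ} (hu : 0 < u) (hz : z ≠ 0)
    (hζ : 0 ≤ ζ) (hδ : 0 ≤ δ) (hδu : δ ≤ Real.exp (-3) * u) :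
    ∃ a b, a ≤ b ∧ b ≤ 0 ∧
      Real.exp (ζ * δ) * min 1 ((z * δ) ^ 2 / 8) / lam ≤ ∫ s in a..b, flowDecay lam ζ z u s := by
  rcases le_total (2 * Real.exp 2) (|z| * u) with large | small
  · have two_div_nonneg : 0 ≤ 2 / lam := by positivity
    have cancel : lam * (2 / lam) = 2 := by field_simp
    have δ_le : δ ≤ Real.exp (-(lam * (2 / lam))) * u := by
      rw [cancel]
      refine hδu.trans ?_
      gcongr
      norm_num
    refine ⟨-(2 / lam), 0, by linarith, le_rfl,
      le_trans ?_ (exp_mul_le_integral_flowDecay hlam hu hz two_div_nonneg hζ δ_le)⟩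
    have error_le : 2 * Real.exp 2 / (|z| * u * lam) ≤ 1 / lam := by
      have := abs_pos.2 hz
      rw [← div_div]
      gcongr
      exact (div_le_one (by positivity)).2 large
    rw [cancel, mul_div_assoc]
    gcongr
    calc min 1 ((z * δ) ^ 2 / 8) / lam ≤ 1 / lam := by gcongr; exact min_le_left _ _
      _ = 2 / lam - 1 / lam := by ring
      _ ≤ _ := by gcongr
  · have two_div_nonneg : 0 ≤ 2 / lam := by positivity
    refine ⟨-(3 / lam), -(2 / lam), by gcongr; norm_num, by linarith,
      le_trans ?_ (exp_mul_sq_le_integral_flowDecay hlam hu hζ hδ hδu small)⟩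
    gcongr
    exact min_le_right _ _

end Oscillation

section TiltedDecay

variable {μ : Measure ℝ} {lam : ℝ}

namespace HasExpMoments

variable (hμ : HasExpMoments μ) (hlam : 0 < lam)
include hμ hlam

lemma integrable_flowDecay (ζ z : ℝ) : Integrable (fun q : ℝ × ℝ => flowDecay lam ζ z q.2 q.1)
    ((volume.restrict (Iic (0 : ℝ))).prod μ) :=
  hμ.integrable_comp_exp_mul hlam (f := fun v => Real.exp (ζ * v) • (1 - Real.cos (z * v)))
    (by fun_prop) ((quadExpBound_one_sub_cos z).exp_smul ζ)

variable [SFinite μ]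

lemma tiltedDecay_ouLevyMeasure (ζ z : ℝ) : tiltedDecay (ouLevyMeasure μ lam) ζ z =
    ∫ u, (∫ s in Iic (0 : ℝ), flowDecay lam ζ z u s) ∂μ := by
  rw [tiltedDecay, integral_ouLevyMeasure_eq_integral_prod μ lam (by fun_prop)]
  exact integral_prod_symm _ (hμ.integrable_flowDecay hlam ζ z)

lemma mul_measureReal_le_tiltedDecay {η ζ z c : ℝ} (hη : 0 < η)
    (hc : ∀ u > η, ∃ a b, a ≤ b ∧ b ≤ 0 ∧ c ≤ ∫ s in a..b, flowDecay lam ζ z u s) :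
    c * μ.real (Ioi η) ≤ tiltedDecay (ouLevyMeasure μ lam) ζ z := by
  have integrable := hμ.integrable_flowDecay hlam ζ z
  rw [hμ.tiltedDecay_ouLevyMeasure hlam]
  refine mul_measureReal_le_integral integrable.integral_prod_right (Eventually.of_forall fun u =>
    integral_nonneg fun s => flowDecay_nonneg lam ζ z u s) measurableSet_Ioi
      (hμ.measure_Ioi_lt_top hη).ne ?_
  filter_upwards [integrable.prod_left_ae] with u integrable_u hu
  obtain ⟨a, b, hab, hb, c_le⟩ := hc u hu
  rw [intervalIntegral.integral_of_le hab] at c_le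
  exact c_le.trans (setIntegral_mono_set integrable_u
    (Eventually.of_forall fun s => flowDecay_nonneg lam ζ z u s)
    (Eventually.of_forall fun s hs => hs.2.trans hb))

lemma log_sub_le_tiltedDecay {η ζ : ℝ} (hη : 0 < η) (hmass : 4 * lam ≤ μ.real (Ioi η))
    (hζ : 0 ≤ ζ) (z : ℝ) :
    4 * Real.log (|z| * η) - 8 ≤ tiltedDecay (ouLevyMeasure μ lam) ζ z := by
  rcases le_total (Real.log (|z| * η)) 2 with small | large
  · linarith [tiltedDecay_nonneg (ouLevyMeasure μ lam) ζ z]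
  have hz : z ≠ 0 := by
    rintro rfl
    norm_num at large
  have := abs_pos.2 hz
  set T := Real.log (|z| * η) / lam with hT
  have T_nonneg : 0 ≤ T := div_nonneg (by linarith) hlam.le
  have lam_mul_T : lam * T = Real.log (|z| * η) := mul_div_cancel₀ _ hlam.ne'
  have exp_lam_mul_T : Real.exp (lam * T) = |z| * η := by
    rw [lam_mul_T, Real.exp_log (by positivity)]
  have T_sub_nonneg : 0 ≤ T - 2 / lam := by
    rw [hT, ← sub_div]
    exact div_nonneg (by linarith) hlam.le
  calc _ = (T - 2 / lam) * (4 * lam) := by rw [← lam_mul_T]; field_simp; ring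
    _ ≤ (T - 2 / lam) * μ.real (Ioi η) := by gcongr
    _ ≤ _ := by
      refine hμ.mul_measureReal_le_tiltedDecay hlam hη fun u hu =>
        ⟨-T, 0, by linarith, le_rfl, ?_⟩
      have u_pos : 0 < u := hη.trans hu
      refine le_trans ?_ (exp_mul_le_integral_flowDecay hlam u_pos hz T_nonneg hζ
        (δ := 0) (by positivity))
      rw [mul_zero, Real.exp_zero, one_mul, exp_lam_mul_T]
      refine sub_le_sub_left ?_ T
      rw [div_le_div_iff₀ (by positivity) hlam]
      have : |z| * η * lam ≤ |z| * u * lam := by gcongr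
      linarith

/-- A mass `m` of positive jumps gives `tiltedDecay` the growth `(m / λ) log |z|`. -/
lemma hasTiltedDecay_ouLevyMeasure (hmass : ENNReal.ofReal (4 * lam) < μ (Ioi 0)) :
    HasTiltedDecay (ouLevyMeasure μ lam) := by
  obtain ⟨η, hη, mass_lt⟩ := exists_lt_measure_Ioi hmass
  have mass_le : 4 * lam ≤ μ.real (Ioi η) :=
    (ENNReal.ofReal_le_iff_le_toReal (hμ.measure_Ioi_lt_top hη).ne).1 mass_lt.le
  refine ⟨1 + Real.exp 4 / η ^ 2, fun ζ hζ z => ?_⟩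
  have decay_ge := hμ.log_sub_le_tiltedDecay hlam hη mass_le hζ z
  have decay_nonneg := tiltedDecay_nonneg (ouLevyMeasure μ lam) ζ z
  set F := tiltedDecay (ouLevyMeasure μ lam) ζ z
  have exp_mul_sq_le : Real.exp (-F / 2) * z ^ 2 ≤ Real.exp 4 / η ^ 2 := by
    rcases eq_or_ne z 0 with rfl | hz
    · simp only [ne_eq, OfNat.ofNat_ne_zero, not_false_eq_true, zero_pow, mul_zero]
      positivity
    have := abs_pos.2 hz
    calc Real.exp (-F / 2) * z ^ 2
        ≤ Real.exp (4 - (Real.log (|z| * η) + Real.log (|z| * η))) * z ^ 2 := by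
          gcongr
          linarith
      _ = Real.exp 4 / (|z| * η * (|z| * η)) * |z| ^ 2 := by
        rw [Real.exp_sub, Real.exp_add, Real.exp_log (by positivity), sq_abs]
      _ = Real.exp 4 / η ^ 2 := by field_simp
  rw [← div_eq_mul_inv, le_div_iff₀ (by positivity), mul_add, mul_one]
  exact add_le_add (Real.exp_le_one_iff.2 (by linarith)) exp_mul_sq_le

lemma exists_le_tiltedDecay_ouLevyMeasure (hpos : 0 < μ (Ioi 0)) :
    ∃ c > 0, ∃ δ > 0, ∀ ζ : ℝ, 0 ≤ ζ → ∀ z : ℝ,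
      c * Real.exp (δ * ζ) * min 1 (z ^ 2) ≤ tiltedDecay (ouLevyMeasure μ lam) ζ z := by
  obtain ⟨η, hη, measure_pos⟩ := exists_lt_measure_Ioi hpos
  have mass_pos : 0 < μ.real (Ioi η) :=
    ENNReal.toReal_pos measure_pos.ne' (hμ.measure_Ioi_lt_top hη).ne
  set δ := Real.exp (-3) * η
  have δ_pos : 0 < δ := by positivity
  refine ⟨min 1 (δ ^ 2 / 8) / lam * μ.real (Ioi η), by positivity, δ, δ_pos, fun ζ hζ z => ?_⟩
  rcases eq_or_ne z 0 with rfl | hz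
  · simpa using tiltedDecay_nonneg (ouLevyMeasure μ lam) ζ 0
  have min_mul_min_le : min 1 (δ ^ 2 / 8) * min 1 (z ^ 2) ≤ min 1 ((z * δ) ^ 2 / 8) := by
    refine le_min (mul_le_one₀ (min_le_left _ _) (by positivity) (min_le_left _ _)) ?_
    calc _ ≤ δ ^ 2 / 8 * z ^ 2 := by gcongr <;> exact min_le_right _ _
      _ = (z * δ) ^ 2 / 8 := by ring
  calc _ = Real.exp (ζ * δ) * (min 1 (δ ^ 2 / 8) * min 1 (z ^ 2)) / lam * μ.real (Ioi η) := by
        rw [mul_comm δ ζ]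
        ring
    _ ≤ Real.exp (ζ * δ) * min 1 ((z * δ) ^ 2 / 8) / lam * μ.real (Ioi η) := by gcongr
    _ ≤ _ := hμ.mul_measureReal_le_tiltedDecay hlam hη fun u hu =>
      exists_min_le_integral_flowDecay hlam (hη.trans hu) hz hζ δ_pos.le
        (mul_le_mul_of_nonneg_left hu.le (Real.exp_pos _).le)

end HasExpMoments

lemma saddlePointRegular_ouLevyMeasure [SFinite μ] (hμ : HasExpMoments μ) (hlam : 0 < lam)
    (hmass : ENNReal.ofReal (4 * lam) < μ (Ioi 0)) {γ : ℝ} (hγ : γ ∈ Ioo (0 : ℝ) 1)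
    (hT1 : Tendsto (fun ξ => levyM μ 4 ξ / levyM μ 2 (γ * ξ) ^ 2) atTop (nhds 0))
    (hT2 : Tendsto (fun ξ => (Real.log (max (levyM μ 4 ξ / levyM μ 2 ξ) 1)
      + Real.log (Real.log (levyM μ 2 ξ))) / ξ) atTop (nhds 0)) :
    SaddlePointRegular (ouLevyMeasure μ lam) := by
  have hpos : 0 < μ (Ioi 0) := hmass.pos
  have growth (ε : ℝ) (hε : ε > 0) :=
    eventually_le_of_tendsto_log_add_log_log_div (hμ.tendsto_levyM_two hpos) hT2 hε
  have levyM_eq (k : ℕ) : levyM (ouLevyMeasure μ lam) k = ouM μ lam k :=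
    funext (hμ.levyM_ouLevyMeasure hlam k)
  refine ⟨hμ.ouLevyMeasure hlam, hμ.hasTiltedDecay_ouLevyMeasure hlam hmass, ?_, ?_,
    hμ.exists_le_tiltedDecay_ouLevyMeasure hlam hpos, ?_, ?_⟩ <;> simp only [levyM_eq]
  · exact hμ.tendsto_ouM_four_div hlam hγ hpos hT1
  · exact hμ.tendsto_ouM_two hlam hpos
  · exact fun ε hε => hμ.eventually_ouM_four_le hlam hpos (fun ε hε => (growth ε hε).mono
      fun _ => And.left) hε
  · exact fun ε hε => hμ.eventually_ouM_two_le hlam (fun ε hε => (growth ε hε).mono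
      fun _ => And.right) hε

end TiltedDecay

theorem OU_invariant_density_ratio_general
    (μ : Measure ℝ)
    (hμ0 : μ {0} = 0)
    (hμint : Integrable (fun u : ℝ => min 1 (u ^ 2)) μ)
    (hμexp : ∀ C : ℝ, Integrable (fun u : ℝ => Real.exp (C * u)) (μ.restrict {u : ℝ | 1 ≤ |u|}))
    (γ : ℝ) (hγ : γ ∈ Set.Ioo (0 : ℝ) 1)
    (hT1 : Tendsto (fun ξ => levyM μ 4 ξ / (levyM μ 2 (γ * ξ)) ^ 2) atTop (nhds 0))
    (hT2 : Tendsto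
      (fun ξ => (Real.log (max (levyM μ 4 ξ / levyM μ 2 ξ) 1)
        + Real.log (Real.log (levyM μ 2 ξ))) / ξ) atTop (nhds 0))
    (lam : ℝ) (hlam : 0 < lam)
    (hmass : ENNReal.ofReal (4 * lam) < μ (Set.Ioi (0 : ℝ)))
    (ζ : ℝ → ℝ)
    (hζ : ∀ x : ℝ, 0 ≤ x → 0 ≤ ζ x ∧ ouM μ lam 1 (ζ x) = x)
    (p : ℝ → ℝ)
    (hp : ∀ x : ℝ, p x = (1 / (2 * Real.pi)) *
      (∫ z : ℝ, Complex.exp (Complex.I * (x : ℂ) * (z : ℂ) + ouPsi μ lam (z : ℂ))).re) :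
    ∀ A : Set ℝ, Bornology.IsBounded A →
      ∀ ε > (0 : ℝ), ∃ X : ℝ, ∀ x : ℝ, X ≤ x → ∀ a ∈ A,
        |p (x + a) / p x * Real.exp (a * ζ x) - 1| < ε := by
  have := sigmaFinite_of_integrable_min_one_sq hμ0 hμint
  have hμ := hasExpMoments_of_integrable hμint hμexp
  have regular := saddlePointRegular_ouLevyMeasure hμ hlam hmass hγ hT1 hT2
  have density_eq : p = levyDensity (ouLevyMeasure μ lam) := by
    funext x
    simp only [hp, levyDensity, hμ.levyExponent_ouLevyMeasure hlam]
  have saddle (x : ℝ) (hx : 0 ≤ x) : 0 ≤ ζ x ∧ levyM (ouLevyMeasure μ lam) 1 (ζ x) = x := by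
    rw [hμ.levyM_ouLevyMeasure hlam]
    exact hζ x hx
  intro A hA ε hε
  obtain ⟨B, hB⟩ := hA.exists_norm_le
  have ratio_lim := Metric.tendsto_nhds.1 (regular.tendsto_levyDensity_ratio saddle B) ε hε
  obtain ⟨X, hX⟩ := eventually_atTop.1 (eventually_prod_principal_iff.1 ratio_lim)
  subst density_eq
  exact ⟨X, fun x hx a ha => hX x hx a (abs_le.1 (hB a ha))⟩

/-- Theorem 5.2: for the invariant density `p` of the Lévy driven
Ornstein–Uhlenbeck process, the ratio `r_a(x) = p(x+a)/p(x)` satisfies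
`r_a(x) ∼ e^{−aζ(x)}` as `x → +∞`, uniformly in `a` in any bounded set. -/
theorem OU_invariant_density_ratio
    (μ : Measure ℝ)
    (hμ0 : μ {0} = 0)
    (hμint : Integrable (fun u : ℝ => min 1 (u ^ 2)) μ)
    (hμinf : μ (Set.Ioi (0 : ℝ)) = ⊤)
    (hμexp : ∀ C : ℝ, Integrable (fun u : ℝ => Real.exp (C * u)) (μ.restrict {u : ℝ | 1 ≤ |u|}))
    (γ : ℝ) (hγ : γ ∈ Set.Ioo (0 : ℝ) 1)
    (hT1 : Tendsto (fun ξ => levyM μ 4 ξ / (levyM μ 2 (γ * ξ)) ^ 2) atTop (nhds 0))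
    (hT2 : Tendsto
      (fun ξ => (Real.log (max (levyM μ 4 ξ / levyM μ 2 ξ) 1)
        + Real.log (Real.log (levyM μ 2 ξ))) / ξ) atTop (nhds 0))
    (lam : ℝ) (hlam : 0 < lam)
    (ζ : ℝ → ℝ)
    (hζ : ∀ x : ℝ, 0 ≤ x → 0 ≤ ζ x ∧ ouM μ lam 1 (ζ x) = x)
    (p : ℝ → ℝ)
    (hp : ∀ x : ℝ, p x = (1 / (2 * Real.pi)) *
      (∫ z : ℝ, Complex.exp (Complex.I * (x : ℂ) * (z : ℂ) + ouPsi μ lam (z : ℂ))).re) :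
    ∀ A : Set ℝ, Bornology.IsBounded A →
      ∀ ε > (0 : ℝ), ∃ X : ℝ, ∀ x : ℝ, X ≤ x → ∀ a ∈ A,
        |p (x + a) / p x * Real.exp (a * ζ x) - 1| < ε := by
  exact OU_invariant_density_ratio_general μ hμ0 hμint hμexp γ hγ hT1 hT2 lam hlam
    (hμinf ▸ ENNReal.ofReal_lt_top) ζ hζ p hp
end

section
/- Let b ∈ ℝ and let f : (−∞, b] → (0,∞) be a positive convex function with ∫_{−∞}^b f(s)² ds < ∞. Set Υ(x) = ∫_{−∞}^b (1 − cos(x f(s))) ds. (i) If there exists γ > 0 such that e^{−γs} f(s) → +∞ as s → −∞, then there exist c > 0 and X > 0 such that Υ(x) ≥ c ln|x| for all |x| ≥ X. (ii) If e^{−γs} f(s) → +∞ as s → −∞ for every γ > 0, then for every c > 0 there exists X > 0 such that Υ(x) ≥ c ln|x| for all |x| ≥ X. -/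
open MeasureTheory Filter Set

/-!
Convexity and square-integrability force `f` to increase from `0` on `(-∞, b]`. Hence, for `x > 0`
large, there is a point `p` with `x * f p = π / 2`, and from `p` on the phase `x * f` is convex and
increasing. Such a phase takes at least as long to run through the first half of a period as through
the second half. Counted from phase `π / 2`, the first half is where `cos ≤ 0`, so that
`Υ x ≥ (b - p) / 2`. Finally, `f s ≥ (π / 2) * exp (γ * s)` near `-∞` gives `-p ≥ log x / γ`.
-/

section Phase

variable {φ : ℝ → ℝ}

lemma half_length_le_integral_one_sub_cos_of_le_add_two_pi {a c : ℝ} (hac : a ≤ c)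
    (hconv : ConvexOn ℝ (Icc a c) φ) (hmono : MonotoneOn φ (Icc a c))
    (hcont : ContinuousOn φ (Icc a c)) (k : ℤ) (ha : φ a = Real.pi / 2 + k * (2 * Real.pi))
    (hc : φ c ≤ φ a + 2 * Real.pi) :
    (c - a) / 2 ≤ ∫ s in a..c, (1 - Real.cos (φ s)) := by
  obtain ⟨m, hm⟩ : ∃ m, m = (a + c) / 2 := ⟨_, rfl⟩
  have ham : a ≤ m := by linarith
  have hmc : m ≤ c := by linarith
  have hφm : φ m ≤ φ a + Real.pi := by
    have hmid := hconv.2 (left_mem_Icc.2 hac) (right_mem_Icc.2 hac)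
      (by norm_num : (0 : ℝ) ≤ 1 / 2) (by norm_num : (0 : ℝ) ≤ 1 / 2) (by norm_num)
    simp only [smul_eq_mul] at hmid
    rw [show 1 / 2 * a + 1 / 2 * c = m by linarith] at hmid
    linarith
  have one_le : ∀ s ∈ Icc a m, 1 ≤ 1 - Real.cos (φ s) := by
    intro s hs
    have hsc : s ∈ Icc a c := ⟨hs.1, hs.2.trans hmc⟩
    have hlow : φ a ≤ φ s := hmono (left_mem_Icc.2 hac) hsc hs.1
    have hupp : φ s ≤ φ m := hmono hsc ⟨ham, hmc⟩ hs.2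
    have hcos : Real.cos (φ s - k * (2 * Real.pi)) ≤ 0 :=
      Real.cos_nonpos_of_pi_div_two_le_of_le (by linarith) (by linarith)
    rw [Real.cos_sub_int_mul_two_pi] at hcos
    linarith
  have hint : ContinuousOn (fun s => 1 - Real.cos (φ s)) (Icc a c) := by fun_prop
  have hint_left : IntervalIntegrable (fun s => 1 - Real.cos (φ s)) volume a m :=
    (hint.mono (Icc_subset_Icc_right hmc)).intervalIntegrable_of_Icc ham
  have hint_right : IntervalIntegrable (fun s => 1 - Real.cos (φ s)) volume m c :=
    (hint.mono (Icc_subset_Icc_left ham)).intervalIntegrable_of_Icc hmc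
  calc (c - a) / 2 = ∫ _ in a..m, (1 : ℝ) := by
        rw [intervalIntegral.integral_const, smul_eq_mul]; linarith
    _ ≤ ∫ s in a..m, (1 - Real.cos (φ s)) :=
        intervalIntegral.integral_mono_on ham intervalIntegrable_const hint_left one_le
    _ ≤ (∫ s in a..m, (1 - Real.cos (φ s))) + ∫ s in m..c, (1 - Real.cos (φ s)) :=
        le_add_of_nonneg_right <| intervalIntegral.integral_nonneg hmc
          fun s _ => sub_nonneg.2 (Real.cos_le_one _)
    _ = ∫ s in a..c, (1 - Real.cos (φ s)) :=
        intervalIntegral.integral_add_adjacent_intervals hint_left hint_right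

lemma half_length_le_integral_one_sub_cos_of_le_add_nat_mul_two_pi {a c : ℝ} (hac : a ≤ c)
    (hconv : ConvexOn ℝ (Icc a c) φ) (hmono : MonotoneOn φ (Icc a c))
    (hcont : ContinuousOn φ (Icc a c)) (k : ℤ) (ha : φ a = Real.pi / 2 + k * (2 * Real.pi))
    (n : ℕ) (hc : φ c ≤ φ a + n * (2 * Real.pi)) :
    (c - a) / 2 ≤ ∫ s in a..c, (1 - Real.cos (φ s)) := by
  induction n generalizing c with
  | zero =>
    refine half_length_le_integral_one_sub_cos_of_le_add_two_pi hac hconv hmono hcont k ha ?_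
    rw [Nat.cast_zero, zero_mul] at hc
    linarith [Real.pi_pos]
  | succ n ih =>
    rcases le_total (φ c) (φ a + n * (2 * Real.pi)) with hcn | hcn
    · exact ih hac hconv hmono hcont hcn
    obtain ⟨r, ⟨har, hrc⟩, hr⟩ := intermediate_value_Icc hac hcont
      ⟨le_add_of_nonneg_right (by positivity), hcn⟩
    have hleft : Icc a r ⊆ Icc a c := Icc_subset_Icc_right hrc
    have hright : Icc r c ⊆ Icc a c := Icc_subset_Icc_left har
    have bound_left := ih har (hconv.subset hleft (convex_Icc a r)) (hmono.mono hleft)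
      (hcont.mono hleft) hr.le
    have bound_right := half_length_le_integral_one_sub_cos_of_le_add_two_pi hrc
      (hconv.subset hright (convex_Icc r c)) (hmono.mono hright) (hcont.mono hright) (k + n)
      (by rw [hr, ha]; push_cast; ring) (by rw [hr]; push_cast at hc; linarith)
    have hint : ContinuousOn (fun s => 1 - Real.cos (φ s)) (Icc a c) := by fun_prop
    rw [← intervalIntegral.integral_add_adjacent_intervals
      ((hint.mono hleft).intervalIntegrable_of_Icc har)
      ((hint.mono hright).intervalIntegrable_of_Icc hrc)]
    linarith

lemma half_length_le_integral_one_sub_cos {a c : ℝ} (hac : a ≤ c)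
    (hconv : ConvexOn ℝ (Icc a c) φ) (hmono : MonotoneOn φ (Icc a c))
    (hcont : ContinuousOn φ (Icc a c)) (k : ℤ) (ha : φ a = Real.pi / 2 + k * (2 * Real.pi)) :
    (c - a) / 2 ≤ ∫ s in a..c, (1 - Real.cos (φ s)) := by
  obtain ⟨n, hn⟩ := Archimedean.arch (φ c - φ a) Real.two_pi_pos
  rw [nsmul_eq_mul] at hn
  exact half_length_le_integral_one_sub_cos_of_le_add_nat_mul_two_pi hac hconv hmono hcont k ha n
    (by linarith)

lemma integrable_one_sub_cos_of_memLp_two {α : Type*} [MeasurableSpace α] {μ : Measure α}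
    {g : α → ℝ} (hg : MemLp g 2 μ) : Integrable (fun s => 1 - Real.cos (g s)) μ := by
  refine (hg.integrable_sq.div_const 2).mono' ?_ (Eventually.of_forall fun s => ?_)
  · exact (continuous_const.sub Real.continuous_cos).comp_aestronglyMeasurable hg.1
  · rw [Real.norm_of_nonneg (sub_nonneg.2 (Real.cos_le_one _))]
    linarith [Real.one_sub_sq_div_two_le_cos (x := g s)]

lemma continuousOn_Iio_of_convexOn_Iic {b : ℝ} (hconv : ConvexOn ℝ (Iic b) φ) :
    ContinuousOn φ (Iio b) :=
  interior_Iic (a := b) ▸ hconv.continuousOn_interior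

lemma half_sub_le_setIntegral_Iic_one_sub_cos {b p : ℝ}
    (hconv : ConvexOn ℝ (Iic b) φ) (hmono : MonotoneOn φ (Iic b))
    (hφ : MemLp φ 2 (volume.restrict (Iic b))) (k : ℤ)
    (hp : φ p = Real.pi / 2 + k * (2 * Real.pi)) :
    (b - p) / 2 ≤ ∫ s in Iic b, (1 - Real.cos (φ s)) := by
  have hnonneg : ∀ s, 0 ≤ 1 - Real.cos (φ s) := fun s => sub_nonneg.2 (Real.cos_le_one _)
  -- `φ` may jump at `b`, so the integral is exhausted by intervals `[p, a]` with `a < b`.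
  suffices ∀ a < b, a ≤ p + 2 * ∫ s in Iic b, (1 - Real.cos (φ s)) by
    linarith [le_of_forall_lt_imp_le_of_dense this]
  intro a hab
  rcases le_total a p with hap | hpa
  · linarith [setIntegral_nonneg (μ := volume) (measurableSet_Iic (a := b)) fun s _ => hnonneg s]
  have hIcc : Icc p a ⊆ Iic b := fun s hs => hs.2.trans hab.le
  have hinterval : (a - p) / 2 ≤ ∫ s in p..a, (1 - Real.cos (φ s)) :=
    half_length_le_integral_one_sub_cos hpa (hconv.subset hIcc (convex_Icc p a)) (hmono.mono hIcc)
      ((continuousOn_Iio_of_convexOn_Iic hconv).mono fun s hs => hs.2.trans_lt hab) k hp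
  have hle : ∫ s in p..a, (1 - Real.cos (φ s)) ≤ ∫ s in Iic b, (1 - Real.cos (φ s)) := by
    rw [intervalIntegral.integral_of_le hpa]
    exact setIntegral_mono_set (integrable_one_sub_cos_of_memLp_two hφ)
      (Eventually.of_forall hnonneg) (Ioc_subset_Icc_self.trans hIcc).eventuallyLE
  linarith

end Phase

section Kernel

variable {f : ℝ → ℝ} {b : ℝ}

lemma frequently_atBot_lt_of_integrableOn_Iic {g : ℝ → ℝ} (hg : IntegrableOn g (Iic b)) {ε : ℝ}
    (hε : 0 < ε) : ∃ᶠ s in atBot, g s < ε := by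
  intro hlarge
  obtain ⟨a, ha⟩ := eventually_atBot.1 hlarge
  have hconst : IntegrableOn (fun _ => ε) (Iic (min a b)) := by
    refine (hg.mono_set (Iic_subset_Iic.2 (min_le_right a b))).mono' aestronglyMeasurable_const ?_
    refine (ae_restrict_iff' measurableSet_Iic).2 (Eventually.of_forall fun s hs => ?_)
    rw [Real.norm_of_nonneg hε.le]
    exact not_lt.1 (ha s (hs.trans (min_le_left a b)))
  simp [integrableOn_const_iff, hε.ne'] at hconst

lemma frequently_atBot_lt_of_integrableOn_Iic_sq (hf : IntegrableOn (fun s => f s ^ 2) (Iic b))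
    {ε : ℝ} (hε : 0 < ε) : ∃ᶠ s in atBot, f s < ε :=
  (frequently_atBot_lt_of_integrableOn_Iic hf (pow_pos hε 2)).mono
    fun _ hs => lt_of_pow_lt_pow_left₀ 2 hε.le hs

lemma monotoneOn_Iic_of_convexOn_of_frequently_le (hconv : ConvexOn ℝ (Iic b) f)
    (hle : ∀ a ≤ b, ∃ᶠ s in atBot, f s ≤ f a) : MonotoneOn f (Iic b) := by
  intro a ha c hc hac
  obtain ⟨s, hfs, hsa⟩ := ((hle a ha).and_eventually (eventually_lt_atBot a)).exists
  exact hconv.le_right_of_left_le'' (hsa.le.trans ha) hc hsa hac hfs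

lemma exists_le_eq_of_frequently_atBot_lt {a u : ℝ} (hcont : ContinuousOn f (Iic a))
    (hlt : ∃ᶠ s in atBot, f s < u) (hu : u ≤ f a) : ∃ p ≤ a, f p = u := by
  obtain ⟨s, hfs, hsa⟩ := (hlt.and_eventually (eventually_le_atBot a)).exists
  exact isPreconnected_Iic.intermediate_value hsa self_mem_Iic hcont ⟨hfs.le, hu⟩

lemma eventually_log_div_add_le_setIntegral_one_sub_cos (hfpos : ∀ s ≤ b, 0 < f s)
    (hfconv : ConvexOn ℝ (Iic b) f) (hf2int : IntegrableOn (fun s => f s ^ 2) (Iic b)) {γ : ℝ}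
    (hγ : 0 < γ) (hgrowth : Tendsto (fun s => Real.exp (-γ * s) * f s) atBot atTop) :
    ∀ᶠ x in atTop, (Real.log x / γ + b) / 2 ≤ ∫ s in Iic b, (1 - Real.cos (x * f s)) := by
  have hsmall : ∀ ε > 0, ∃ᶠ s in atBot, f s < ε :=
    fun ε hε => frequently_atBot_lt_of_integrableOn_Iic_sq hf2int hε
  have hmono : MonotoneOn f (Iic b) :=
    monotoneOn_Iic_of_convexOn_of_frequently_le hfconv fun a ha =>
      (hsmall _ (hfpos a ha)).mono fun _ => le_of_lt
  have hL2 : MemLp f 2 (volume.restrict (Iic b)) :=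
    (memLp_two_iff_integrable_sq (aemeasurable_restrict_of_monotoneOn measurableSet_Iic
      hmono).aestronglyMeasurable).2 hf2int
  obtain ⟨a, ha⟩ := eventually_atBot.1
    ((hgrowth.eventually_ge_atTop (Real.pi / 2)).and (eventually_lt_atBot b))
  have hab : a < b := (ha a le_rfl).2
  have hlarge : ∀ᶠ x in atTop, Real.pi / 2 ≤ x * f a :=
    (tendsto_id.atTop_mul_const (hfpos a hab.le)).eventually_ge_atTop _
  filter_upwards [eventually_gt_atTop 0, hlarge] with x hx hxa
  obtain ⟨p, hpa, hfp⟩ : ∃ p ≤ a, f p = Real.pi / 2 / x :=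
    exists_le_eq_of_frequently_atBot_lt
      ((continuousOn_Iio_of_convexOn_Iic hfconv).mono (Iic_subset_Iio.2 hab))
      (hsmall _ (by positivity)) ((div_le_iff₀' hx).2 hxa)
  have hphase : x * f p = Real.pi / 2 := by rw [hfp]; field_simp
  have hlog : Real.log x ≤ -γ * p := by
    refine (Real.log_le_iff_le_exp hx).2 (le_of_mul_le_mul_right ?_ (hfpos p (hpa.trans hab.le)))
    exact hphase.trans_le (ha p hpa).1
  have hpos : Real.log x / γ ≤ -p := (div_le_iff₀ hγ).2 (by linarith)
  have hhalf := half_sub_le_setIntegral_Iic_one_sub_cos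
    (hfconv.smul hx.le) (fun s hs t ht hst => mul_le_mul_of_nonneg_left (hmono hs ht hst) hx.le)
    (hL2.const_mul x) 0 (by simpa using hphase)
  exact le_trans (by linarith) hhalf

lemma eventually_mul_log_le_setIntegral_one_sub_cos (hfpos : ∀ s ≤ b, 0 < f s)
    (hfconv : ConvexOn ℝ (Iic b) f) (hf2int : IntegrableOn (fun s => f s ^ 2) (Iic b)) {γ c : ℝ}
    (hγ : 0 < γ) (hc : 2 * γ * c < 1)
    (hgrowth : Tendsto (fun s => Real.exp (-γ * s) * f s) atBot atTop) :
    ∀ᶠ x in atTop, c * Real.log x ≤ ∫ s in Iic b, (1 - Real.cos (x * f s)) := by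
  have hgap : 0 < (2 * γ)⁻¹ - c := by
    rw [sub_pos, ← one_div, lt_div_iff₀ (by positivity)]
    linarith
  have hlog : ∀ᶠ x in atTop, -b / 2 ≤ Real.log x * ((2 * γ)⁻¹ - c) :=
    (Real.tendsto_log_atTop.atTop_mul_const hgap).eventually_ge_atTop _
  filter_upwards [hlog,
    eventually_log_div_add_le_setIntegral_one_sub_cos hfpos hfconv hf2int hγ hgrowth] with x hx hΥ
  calc c * Real.log x ≤ Real.log x * (2 * γ)⁻¹ + b / 2 := by linarith
    _ = (Real.log x / γ + b) / 2 := by field_simp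
    _ ≤ _ := hΥ

end Kernel

lemma cos_abs_mul (x y : ℝ) : Real.cos (|x| * y) = Real.cos (x * y) := by
  rcases abs_choice x with hx | hx <;> simp [hx]

/-- key inequality (ineq1) in Lemma 3.3, cases i = 3, 4: for a positive convex
square-integrable kernel `f` on `(−∞,b]`, with `Υ(x) = ∫_{−∞}^b (1 − cos(x f(s))) ds`:
(i) at most exponential decay of `f` at `−∞` gives `Υ(x) ≥ c ln|x|` for some `c > 0` and
`|x|` large; (ii) subexponential decay gives it for every `c > 0`. -/
theorem convexKernel_log_lowerBound
    (b : ℝ) (f : ℝ → ℝ)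
    (hfpos : ∀ s ≤ b, 0 < f s)
    (hfconv : ConvexOn ℝ (Set.Iic b) f)
    (hf2int : IntegrableOn (fun s => f s ^ 2) (Set.Iic b))
    (Υ : ℝ → ℝ)
    (hΥ : ∀ x : ℝ, Υ x = ∫ s in Set.Iic b, (1 - Real.cos (x * f s))) :
    ((∃ γ : ℝ, 0 < γ ∧ Tendsto (fun s => Real.exp (-γ * s) * f s) atBot atTop) →
      ∃ c > (0 : ℝ), ∃ X > (0 : ℝ), ∀ x : ℝ, X ≤ |x| → c * Real.log |x| ≤ Υ x) ∧
    ((∀ γ : ℝ, 0 < γ → Tendsto (fun s => Real.exp (-γ * s) * f s) atBot atTop) →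
      ∀ c > (0 : ℝ), ∃ X > (0 : ℝ), ∀ x : ℝ, X ≤ |x| → c * Real.log |x| ≤ Υ x) := by
  have of_growth : ∀ γ > 0, ∀ c, 2 * γ * c < 1 →
      Tendsto (fun s => Real.exp (-γ * s) * f s) atBot atTop →
      ∃ X > (0 : ℝ), ∀ x : ℝ, X ≤ |x| → c * Real.log |x| ≤ Υ x := by
    intro γ hγ c hc hgrowth
    obtain ⟨X, hX, hbound⟩ := (atTop_basis' 1).eventually_iff.1
      (eventually_mul_log_le_setIntegral_one_sub_cos hfpos hfconv hf2int hγ hc hgrowth)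
    refine ⟨X, zero_lt_one.trans_le hX, fun x hx => ?_⟩
    simpa only [hΥ, cos_abs_mul] using hbound hx
  constructor
  · rintro ⟨γ, hγ, hgrowth⟩
    exact ⟨1 / (4 * γ), by positivity, of_growth γ hγ _ (by field_simp; norm_num) hgrowth⟩
  · intro hgrowth c hc
    have hγ : 0 < 1 / (4 * c) := by positivity
    exact of_growth _ hγ c (by field_simp; norm_num) (hgrowth _ hγ)
end
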